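/- The number α₅ = √11 · ln((√11 − 1)/(√11 + 1)) has irrationality measure at most 5.82338; that is, for every real κ > 5.82338, there exist only finitely many pairs (p, q) with p ∈ ℤ and q a positive integer such that |α₅ − p/q| < q^(−κ). -/

import Mathlib

section
open MeasureTheory Filter Topology Complex

namespace Pf

/-- continuous boundary function -/
lemma exists_aux : ∃ g : ℂ → ℂ, ContinuousOn g {s | 1 ≤ s.re} ∧ ∀ s : ℂ, 1 < s.re →
    g s = LSeries (fun n => ((ArithmeticFunction.vonMangoldt n : ℝ) : ℂ)) s / s - 1 / (s - 1) := by
  refine ⟨fun s => (ArithmeticFunction.vonMangoldt.LFunctionResidueClassAux (q := 1) 1 s - 1) / s,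
    ?_, ?_⟩
  · refine ContinuousOn.div ((ArithmeticFunction.vonMangoldt.continuousOn_LFunctionResidueClassAux _).sub
      continuousOn_const) continuousOn_id ?_
    rintro s hs rfl
    simp at hs
    linarith
  · intro s hs
    have h := ArithmeticFunction.vonMangoldt.eqOn_LFunctionResidueClassAux (q := 1) (a := 1)
      isUnit_one (x := s) hs
    have e : ArithmeticFunction.vonMangoldt.residueClass (q := 1) 1 = fun n => ArithmeticFunction.vonMangoldt n := by
      ext n
      simp [ArithmeticFunction.vonMangoldt.residueClass, Subsingleton.elim ((n : ZMod 1)) 1]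
    rw [e] at h
    simp only at h ⊢
    rw [h]
    have h0 : s ≠ 0 := by rintro rfl; simp at hs; linarith
    have h1 : s - 1 ≠ 0 := by
      intro hh
      rw [sub_eq_zero] at hh; subst hh; simp at hs
    simp only [Nat.totient_one, Nat.cast_one, inv_one]
    field_simp
    ring

/-- the error function -/
noncomputable def bb (u : ℝ) : ℝ := if 0 < u then Chebyshev.psi (Real.exp u) * Real.exp (-u) - 1 else 0

lemma bb_meas : Measurable bb := by
  unfold bb
  have : Measurable Chebyshev.psi := Chebyshev.psi_mono.measurable
  refine Measurable.ite measurableSet_Ioi ?_ measurable_const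
  fun_prop

lemma bb_bound (u : ℝ) : |bb u| ≤ 10 := by
  unfold bb
  split_ifs with h
  · have h1 := Chebyshev.psi_le_const_mul_self (Real.exp_pos u).le
    have h2 := Chebyshev.psi_nonneg (Real.exp u)
    have h3 : Real.log 4 ≤ 3 := by
      have := Real.log_le_sub_one_of_pos (show (0:ℝ) < 4 by norm_num)
      linarith
    have h4 : Real.exp u * Real.exp (-u) = 1 := by rw [← Real.exp_add]; simp
    have h5 : Chebyshev.psi (Real.exp u) * Real.exp (-u) ≤ 7 := by
      have := mul_le_mul_of_nonneg_right h1 (Real.exp_pos (-u)).le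
      rw [mul_assoc, h4] at this
      linarith
    have h6 : 0 ≤ Chebyshev.psi (Real.exp u) * Real.exp (-u) := by positivity
    rw [abs_le]; constructor <;> linarith
  · norm_num

lemma laplace (s : ℂ) (hs : 1 < s.re) :
    ∫ u in Set.Ioi (0:ℝ), (bb u : ℂ) * cexp (-(s - 1) * u) =
      LSeries (fun n => ((ArithmeticFunction.vonMangoldt n : ℝ) : ℂ)) s / s - 1 / (s - 1) := by
  have h0 : s ≠ 0 := by rintro rfl; simp at hs; linarith
  have h1 : 0 < (s-1).re := by simp; linarith
  have hL := LSeries_eq_mul_integral_of_nonneg (fun n => ArithmeticFunction.vonMangoldt n) (r := 1)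
    zero_le_one (s := s) hs ?_ (fun n => ArithmeticFunction.vonMangoldt_nonneg)
  swap
  · refine Asymptotics.IsBigO.of_bound (Real.log 4 + 4) (Eventually.of_forall fun n => ?_)
    have := Chebyshev.psi_le_const_mul_self (Nat.cast_nonneg (α := ℝ) n)
    have h2 := Chebyshev.psi_nonneg n
    rw [Chebyshev.psi, Nat.floor_natCast] at this h2
    have e : Finset.Icc 1 n = Finset.Ioc 0 n := by ext; simp; lia
    rw [e, Real.norm_of_nonneg h2]
    simpa using this
  rw [hL, mul_div_cancel_left₀ _ h0]
  have hexp : ∫ u in Set.Ioi (0:ℝ), cexp (-(s-1) * u) = 1 / (s - 1) := by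
    have := integral_exp_mul_complex_Ioi (a := -(s-1)) (by simp; linarith) 0
    rw [this, neg_div_neg_eq]; simp
  have himg : Real.exp '' Set.Ioi 0 = Set.Ioi 1 := by
    ext x; constructor
    · rintro ⟨y, hy, rfl⟩; simpa using hy
    · intro hx
      exact ⟨Real.log x, Real.log_pos hx, Real.exp_log (lt_trans one_pos hx)⟩
  rw [← himg, integral_image_eq_integral_abs_deriv_smul measurableSet_Ioi
    (fun x _ => (Real.hasDerivAt_exp x).hasDerivWithinAt) (Real.exp_injective.injOn), ← hexp]
  rw [eq_sub_iff_add_eq, ← integral_add]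
  · refine setIntegral_congr_fun measurableSet_Ioi fun u hu => ?_
    have hu' : 0 < u := hu
    have e : Finset.Icc 1 ⌊Real.exp u⌋₊ = Finset.Ioc 0 ⌊Real.exp u⌋₊ := by ext; simp; lia
    simp only [bb, hu', if_true, e, abs_of_pos (Real.exp_pos u), real_smul]
    have e2 : ((Real.exp u : ℝ) : ℂ) ^ (-(s+1)) = cexp (-(s+1) * u) := by
      rw [Complex.ofReal_exp, ← Complex.ofReal_exp, Complex.cpow_def_of_ne_zero (by exact_mod_cast (Real.exp_pos u).ne'),
        ← Complex.ofReal_log (Real.exp_pos u).le, Real.log_exp, mul_comm]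
    rw [e2, Chebyshev.psi]
    push_cast
    have e3 : cexp (-u) * cexp (-(s-1) * u) = cexp u * cexp (-(s+1)*u) := by
      rw [← Complex.exp_add, ← Complex.exp_add]; congr 1; ring
    linear_combination (∑ x ∈ Finset.Ioc 0 ⌊Real.exp u⌋₊, (ArithmeticFunction.vonMangoldt x : ℂ)) * e3
  · refine Integrable.mono' (g := fun u => 10 * Real.exp (-(s.re - 1) * u)) ?_ ?_ ?_
    · exact (integrableOn_exp_mul_Ioi (by linarith) 0).const_mul 10
    · exact (Complex.measurable_ofReal.comp bb_meas).aestronglyMeasurable.mul (by fun_prop)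
    · refine Eventually.of_forall fun u => ?_
      rw [norm_mul, Complex.norm_exp]
      simp only [norm_real, Real.norm_eq_abs]
      have : (-(s - 1) * (u:ℂ)).re = -(s.re - 1) * u := by simp
      rw [this]
      gcongr
      exact bb_bound u
  · exact integrableOn_exp_mul_complex_Ioi (by simp; linarith) 0

end Pf
end

section
open MeasureTheory Filter Topology Complex

namespace Pf

noncomputable def tri (t : ℝ) : ℂ := ((max 0 (1 - |t|) : ℝ) : ℂ)

lemma tri_cont : Continuous tri := by unfold tri; fun_prop

lemma tri_supp : HasCompactSupport tri := by
  refine HasCompactSupport.intro (K := Set.Icc (-1) 1) isCompact_Icc ?_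
  intro x hx
  have : 1 ≤ |x| := by
    by_contra h
    push Not at h
    rw [abs_lt] at h
    exact hx ⟨h.1.le, h.2.le⟩
  simp [tri, this]

lemma tri_int : Integrable tri := tri_cont.integrable_of_hasCompactSupport tri_supp

noncomputable def kk (w : ℝ) : ℝ := Real.sinc (Real.pi * w) ^ 2

lemma kk_nonneg (w : ℝ) : 0 ≤ kk w := sq_nonneg _

lemma kk_cont : Continuous kk := by unfold kk; fun_prop

lemma kk_int : Integrable kk := by
  refine Integrable.mono' (g := fun w => 2 * (1 + w^2)⁻¹) (integrable_inv_one_add_sq.const_mul 2)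
    kk_cont.aestronglyMeasurable (Eventually.of_forall fun w => ?_)
  rw [Real.norm_of_nonneg (kk_nonneg w), ← div_eq_mul_inv, le_div_iff₀ (by positivity)]
  have h1 : kk w ≤ 1 := by
    unfold kk
    have := Real.sinc_le_one (Real.pi * w)
    have := Real.neg_one_le_sinc (Real.pi * w)
    nlinarith
  have h2 : kk w * w^2 ≤ 1 := by
    unfold kk
    rcases eq_or_ne w 0 with rfl | hw
    · simp
    · rw [Real.sinc_of_ne_zero (by positivity), div_pow]
      have h3 := Real.sin_sq_le_one (Real.pi * w)
      have h4 : 1 ≤ Real.pi^2 := by nlinarith [Real.pi_gt_three]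
      rw [div_mul_eq_mul_div, div_le_one (by positivity)]
      have : 0 < w^2 := by positivity
      nlinarith
  linarith

lemma tri_fourier (w : ℝ) : ∫ t, tri t * cexp (-(2 * Real.pi * t * w : ℝ) * I) = (kk w : ℂ) := by
  have hz : ∀ t ∉ Set.Ioc (-1:ℝ) 1, tri t * cexp (-(2 * Real.pi * t * w : ℝ) * I) = 0 := by
    intro t ht
    have : 1 ≤ |t| := by
      by_contra h
      push Not at h
      rw [abs_lt] at h
      exact ht ⟨h.1, h.2.le⟩
    simp [tri, this]
  rw [← setIntegral_eq_integral_of_forall_compl_eq_zero hz, ← intervalIntegral.integral_of_le (by norm_num)]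
  have hc : Continuous fun t => tri t * cexp (-(2 * Real.pi * t * w : ℝ) * I) :=
    tri_cont.mul (by fun_prop)
  rw [← intervalIntegral.integral_add_adjacent_intervals (b := 0) (hc.intervalIntegrable _ _) (hc.intervalIntegrable _ _)]
  have e1 : ∫ t in (-1:ℝ)..0, tri t * cexp (-(2 * Real.pi * t * w : ℝ) * I) =
      ∫ t in (0:ℝ)..1, tri t * cexp ((2 * Real.pi * t * w : ℝ) * I) := by
    have := intervalIntegral.integral_comp_neg (a := 0) (b := 1)
      (fun t => tri t * cexp (-(2 * Real.pi * t * w : ℝ) * I))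
    simp only [neg_zero] at this
    rw [← this]
    refine intervalIntegral.integral_congr fun t _ => ?_
    simp [tri]
  have hc' : Continuous fun t => tri t * cexp ((2 * Real.pi * t * w : ℝ) * I) :=
    tri_cont.mul (by fun_prop)
  rw [e1, ← intervalIntegral.integral_add (hc'.intervalIntegrable _ _) (hc.intervalIntegrable _ _)]
  have e2 : ∀ t ∈ Set.uIcc (0:ℝ) 1, tri t * cexp ((2 * Real.pi * t * w : ℝ) * I)
      + tri t * cexp (-(2 * Real.pi * t * w : ℝ) * I) =
      ((2 * (1 - t) * Real.cos (2 * Real.pi * w * t) : ℝ) : ℂ) := by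
    intro t ht
    rw [Set.uIcc_of_le zero_le_one] at ht
    have : tri t = ((1 - t : ℝ) : ℂ) := by
      rw [tri, abs_of_nonneg ht.1, max_eq_right (by linarith [ht.2])]
    rw [this, ← mul_add, show (2 * Real.pi * t * w) = 2 * Real.pi * w * t by ring]
    rw [← Complex.two_cos]
    push_cast; ring
  rw [intervalIntegral.integral_congr e2, intervalIntegral.integral_ofReal]
  congr 1
  rcases eq_or_ne w 0 with rfl | hw
  · have : ∀ t ∈ Set.uIcc (0:ℝ) 1, HasDerivAt (fun t => 2 * t - t^2) (2 * (1 - t) * Real.cos (2 * Real.pi * 0 * t)) t := by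
      intro t _
      have := ((hasDerivAt_id t).const_mul 2).sub ((hasDerivAt_id t).pow 2)
      convert! this using 1
      simp; ring
    rw [intervalIntegral.integral_eq_sub_of_hasDerivAt this (Continuous.intervalIntegrable (by fun_prop) _ _)]
    norm_num [kk]
  · set c := 2 * Real.pi * w with hcdef
    have hc0 : c ≠ 0 := by positivity
    have : ∀ t ∈ Set.uIcc (0:ℝ) 1, HasDerivAt (fun t => 2 * (1 - t) * Real.sin (c * t) / c - 2 * Real.cos (c*t) / c^2) (2 * (1 - t) * Real.cos (c * t)) t := by
      intro t _
      have h0 : HasDerivAt (fun t => c * t) c t := by simpa using (hasDerivAt_id t).const_mul c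
      have h1 := (Real.hasDerivAt_sin (c*t)).comp t h0
      have h2 := (Real.hasDerivAt_cos (c*t)).comp t h0
      have h3 : HasDerivAt (fun t : ℝ => 2 * (1 - t)) (-2) t := by
        simpa using ((hasDerivAt_id t).const_sub 1).const_mul 2
      have := ((h3.mul h1).div_const c).sub ((h2.const_mul 2).div_const (c^2))
      convert! this using 1
      simp
      field_simp
      ring
    rw [intervalIntegral.integral_eq_sub_of_hasDerivAt this (Continuous.intervalIntegrable (by fun_prop) _ _)]
    unfold kk
    rw [Real.sinc_of_ne_zero (by positivity)]
    have h5 : Real.cos c = 1 - 2 * Real.sin (Real.pi * w)^2 := by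
      rw [hcdef, mul_assoc, Real.cos_two_mul, Real.cos_sq']; ring
    simp [h5]
    rw [hcdef]
    field_simp
    ring

lemma tri_fourier' : FourierTransform.fourier tri = fun w => (kk w : ℂ) := by
  ext w
  rw [Real.fourier_eq', ← tri_fourier w]
  refine integral_congr_ae (Eventually.of_forall fun t => ?_)
  simp [mul_comm]
  left; congr 1; ring

lemma kk_integral : ∫ w, kk w = 1 := by
  have h := Continuous.fourierInv_fourier_eq tri_cont tri_int (by rw [tri_fourier']; exact kk_int.ofReal)
  have h2 := congrFun h 0
  rw [Real.fourierInv_eq', tri_fourier'] at h2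
  simp [tri, integral_ofReal] at h2
  exact_mod_cast h2

end Pf
end

section
open MeasureTheory Filter Topology Complex

namespace Pf

lemma norm_exp_neg_I (x : ℝ) : ‖cexp (-(x:ℂ) * I)‖ = 1 := by
  rw [← ofReal_neg, norm_exp_ofReal_mul_I]

lemma smooth_delta (g : ℂ → ℂ)
    (hg : ∀ s : ℂ, 1 < s.re → g s = ∫ u in Set.Ioi (0:ℝ), (bb u : ℂ) * cexp (-(s - 1) * u))
    (l v d : ℝ) (hd : 0 < d) :
    ∫ u in Set.Ioi (0:ℝ), (bb u : ℂ) * cexp (-d * u) * (kk (l * (v - u)) : ℂ) =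
    ∫ t, tri t * cexp (-(2 * Real.pi * t * (l * v) : ℝ) * I) * g (1 + d - (2 * Real.pi * l * t : ℝ) * I) := by
  have e1 : ∀ u : ℝ, (bb u : ℂ) * cexp (-d * u) * (kk (l * (v - u)) : ℂ) =
      ∫ t, (bb u : ℂ) * cexp (-d * u) * (tri t * cexp (-(2 * Real.pi * t * (l * (v - u)) : ℝ) * I)) := by
    intro u
    rw [← tri_fourier, integral_const_mul]
  simp_rw [e1]
  rw [integral_integral_swap]
  · refine integral_congr_ae (Eventually.of_forall fun t => ?_)
    simp only
    rw [hg _ (by simp [hd]), ← integral_const_mul]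
    refine integral_congr_ae (Eventually.of_forall fun u => ?_)
    simp only
    have : cexp (-d * u) * cexp (-(2 * Real.pi * t * (l * (v - u)) : ℝ) * I) =
      cexp (-(2 * Real.pi * t * (l * v) : ℝ) * I) * cexp (-(1 + d - (2 * Real.pi * l * t : ℝ) * I - 1) * u) := by
      rw [← Complex.exp_add, ← Complex.exp_add]; congr 1; push_cast; ring
    linear_combination (bb u * tri t : ℂ) * this
  · have h1 : Integrable (fun u : ℝ => (bb u : ℂ) * cexp (-d * u)) (volume.restrict (Set.Ioi 0)) := by
      refine Integrable.mono' (g := fun u => 10 * Real.exp (-d * u)) ?_ ?_ ?_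
      · exact (integrableOn_exp_mul_Ioi (by linarith) 0).const_mul 10
      · exact (Complex.measurable_ofReal.comp bb_meas).aestronglyMeasurable.mul (by fun_prop)
      · refine Eventually.of_forall fun u => ?_
        rw [norm_mul, Complex.norm_exp]
        simp only [norm_real, Real.norm_eq_abs]
        have : (-d * (u:ℂ)).re = -d * u := by simp
        rw [this]
        gcongr
        exact bb_bound u
    refine (h1.mul_prod tri_int).mono ?_ (Eventually.of_forall fun p => ?_)
    · refine AEStronglyMeasurable.mul ?_ ?_
      · exact ((Complex.measurable_ofReal.comp bb_meas).comp measurable_fst).aestronglyMeasurable.mul (by fun_prop)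
      · exact (tri_cont.comp continuous_snd).aestronglyMeasurable.mul (by fun_prop)
    · simp only [Function.uncurry]
      rw [norm_mul, norm_mul (tri p.2), norm_exp_neg_I, mul_one, ← norm_mul]

lemma smooth_zero (g : ℂ → ℂ) (hgc : ContinuousOn g {s | 1 ≤ s.re})
    (hg : ∀ s : ℂ, 1 < s.re → g s = ∫ u in Set.Ioi (0:ℝ), (bb u : ℂ) * cexp (-(s - 1) * u))
    (l v : ℝ) (hl : 0 < l) :
    ∫ u in Set.Ioi (0:ℝ), (bb u : ℂ) * (kk (l * (v - u)) : ℂ) =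
    ∫ t, tri t * cexp (-(2 * Real.pi * t * (l * v) : ℝ) * I) * g (1 - (2 * Real.pi * l * t : ℝ) * I) := by
  have hki : Integrable (fun u => kk (l * (v - u))) := by
    have := (kk_int.comp_mul_left' hl.ne').comp_sub_left v
    exact this
  have L1 : Tendsto (fun d : ℝ => ∫ u in Set.Ioi (0:ℝ), (bb u : ℂ) * cexp (-d * u) * (kk (l * (v - u)) : ℂ))
      (𝓝[>] 0) (𝓝 (∫ u in Set.Ioi (0:ℝ), (bb u : ℂ) * (kk (l * (v - u)) : ℂ))) := by
    refine tendsto_integral_filter_of_dominated_convergence (fun u => 10 * kk (l * (v - u))) ?_ ?_ ?_ ?_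
    · refine Eventually.of_forall fun d => ?_
      refine AEStronglyMeasurable.mul ?_ ?_
      · exact (Complex.measurable_ofReal.comp bb_meas).aestronglyMeasurable.mul (by fun_prop)
      · exact (Complex.measurable_ofReal.comp (kk_cont.measurable.comp (by fun_prop))).aestronglyMeasurable
    · filter_upwards [self_mem_nhdsWithin] with d hd
      filter_upwards [ae_restrict_mem measurableSet_Ioi] with u hu
      have hd' : 0 < d := hd
      have hu' : 0 < u := hu
      rw [norm_mul, norm_mul, Complex.norm_exp]
      simp only [norm_real, Real.norm_eq_abs, abs_of_nonneg (kk_nonneg _)]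
      have : (-d * (u:ℂ)).re = -d * u := by simp
      rw [this]
      gcongr
      · exact kk_nonneg _
      · have h1 := bb_bound u
        have h2 : Real.exp (-d * u) ≤ 1 := by
          rw [Real.exp_le_one_iff]; nlinarith
        have := abs_nonneg (bb u)
        have := Real.exp_pos (-d*u)
        nlinarith
    · exact (hki.const_mul 10).integrableOn
    · refine Eventually.of_forall fun u => ?_
      have : Tendsto (fun d : ℝ => (bb u : ℂ) * cexp (-d * u) * (kk (l * (v - u)) : ℂ)) (𝓝 0)
          (𝓝 ((bb u : ℂ) * cexp (-(0:ℝ) * u) * (kk (l * (v - u)) : ℂ))) := by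
        apply Continuous.tendsto (f := fun d : ℝ => (bb u : ℂ) * cexp (-d * u) * (kk (l * (v - u)) : ℂ))
        fun_prop
      simpa using this.mono_left nhdsWithin_le_nhds
  -- bound on compact set
  have hK : IsCompact (Set.Icc (0:ℝ) 1 ×ˢ Set.Icc (-1:ℝ) 1) := isCompact_Icc.prod isCompact_Icc
  have hcont : ContinuousOn (fun p : ℝ × ℝ => g (1 + p.1 - (2 * Real.pi * l * p.2 : ℝ) * I))
      (Set.Ici (0:ℝ) ×ˢ Set.univ) := by
    refine hgc.comp (by fun_prop) ?_
    intro p hp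
    have : 0 ≤ p.1 := hp.1
    simp [this]
  obtain ⟨C, hC⟩ := hK.exists_bound_of_continuousOn (hcont.mono (Set.prod_mono (fun x hx => hx.1) (Set.subset_univ _)))
  have L2 : Tendsto (fun d : ℝ => ∫ t, tri t * cexp (-(2 * Real.pi * t * (l * v) : ℝ) * I) * g (1 + d - (2 * Real.pi * l * t : ℝ) * I))
      (𝓝[>] 0) (𝓝 (∫ t, tri t * cexp (-(2 * Real.pi * t * (l * v) : ℝ) * I) * g (1 - (2 * Real.pi * l * t : ℝ) * I))) := by
    refine tendsto_integral_filter_of_dominated_convergence (fun t => ‖tri t‖ * C) ?_ ?_ ?_ ?_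
    · filter_upwards [self_mem_nhdsWithin] with d hd
      refine AEStronglyMeasurable.mul ?_ ?_
      · exact tri_cont.aestronglyMeasurable.mul (by fun_prop)
      · refine Continuous.aestronglyMeasurable ?_
        have := hcont.comp_continuous (f := fun t : ℝ => (d, t)) (by fun_prop) (fun t => ⟨Set.mem_Ici.2 (le_of_lt hd), trivial⟩)
        exact this
    · filter_upwards [self_mem_nhdsWithin, nhdsWithin_le_nhds (Iio_mem_nhds one_pos)] with d hd hd1
      refine Eventually.of_forall fun t => ?_
      rw [norm_mul, norm_mul, norm_exp_neg_I, mul_one]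
      by_cases ht : |t| ≤ 1
      · gcongr
        exact hC (d, t) ⟨⟨le_of_lt hd, le_of_lt hd1⟩, abs_le.mp ht⟩
      · have : tri t = 0 := by simp [tri, (not_le.mp ht).le]
        simp [this]
    · exact tri_int.norm.mul_const C
    · refine Eventually.of_forall fun t => ?_
      have h3 : ContinuousWithinAt (fun d : ℝ => g (1 + d - (2 * Real.pi * l * t : ℝ) * I)) (Set.Ici 0) 0 := by
        have := (hcont (0, t) ⟨Set.mem_Ici.2 le_rfl, trivial⟩).comp (f := fun d : ℝ => (d, t)) (s := Set.Ici 0) (x := 0)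
          (by fun_prop) (fun d hd => ⟨hd, trivial⟩)
        exact this
      have h4 := (h3.mono Set.Ioi_subset_Ici_self).tendsto
      simp only [ofReal_zero, add_zero] at h4
      exact tendsto_const_nhds.mul h4
  refine tendsto_nhds_unique L1 (L2.congr' ?_)
  filter_upwards [self_mem_nhdsWithin] with d hd
  exact (smooth_delta g hg l v d hd).symm

lemma smooth_tendsto (l : ℝ) (hl : 0 < l) :
    Tendsto (fun v : ℝ => ∫ u, bb u * kk (l * (v - u))) atTop (𝓝 0) := by
  obtain ⟨g, hgc, hg⟩ := exists_aux
  have hg' : ∀ s : ℂ, 1 < s.re → g s = ∫ u in Set.Ioi (0:ℝ), (bb u : ℂ) * cexp (-(s - 1) * u) :=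
    fun s hs => by rw [hg s hs, laplace s hs]
  have key := fun v => smooth_zero g hgc hg' l v hl
  have RL := Real.zero_at_infty_fourier (fun t => tri t * g (1 - (2 * Real.pi * l * t : ℝ) * I))
  have RL2 := RL.comp ((tendsto_id.const_mul_atTop hl).mono_right atTop_le_cocompact)
  have : Tendsto (fun v : ℝ => ((∫ u, bb u * kk (l * (v - u)) : ℝ) : ℂ)) atTop (𝓝 0) := by
    refine RL2.congr fun v => ?_
    rw [← integral_complex_ofReal, ← setIntegral_eq_integral_of_forall_compl_eq_zero (s := Set.Ioi 0)]
    · simp only [ofReal_mul]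
      rw [key v]
      simp only [Function.comp, Real.fourier_eq', id]
      refine integral_congr_ae (Eventually.of_forall fun t => ?_)
      simp only [smul_eq_mul]
      have e : cexp ((-2 * Real.pi * inner ℝ t (l * v) : ℝ) * I) = cexp (-(2 * Real.pi * t * (l * v) : ℝ) * I) := by
        congr 1; simp; ring
      rw [e, ← mul_assoc, mul_comm (cexp _) (tri t)]; simp only [ofReal_mul]
    · intro u hu
      have : ¬ 0 < u := hu
      simp [bb, this]
  have h0 := (Complex.continuous_re.tendsto 0).comp this
  simpa [Function.comp_def] using h0

end Pf
end

section
open MeasureTheory Filter Topology Complex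

namespace Pf

lemma smooth_tendsto' (l : ℝ) (hl : 0 < l) :
    Tendsto (fun v : ℝ => ∫ w, bb (v - w / l) * kk w) atTop (𝓝 0) := by
  have h := (smooth_tendsto l hl).const_mul l
  rw [mul_zero] at h
  refine h.congr fun v => ?_
  have h1 : ∫ u, bb u * kk (l * (v - u)) = ∫ u, bb (v - u) * kk (l * u) := by
    rw [← integral_sub_left_eq_self (fun u => bb u * kk (l * (v - u))) volume v]
    simp
  have h2 := Measure.integral_comp_mul_left (fun w => bb (v - w / l) * kk w) l
  simp only [mul_div_cancel_left₀ _ hl.ne'] at h2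
  rw [h1, h2, abs_of_pos (inv_pos.2 hl), smul_eq_mul, mul_inv_cancel_left₀ hl.ne']

lemma kk_tail (e : ℝ) (he : 0 < e) : ∃ R : ℝ, 0 < R ∧ ∫ w, (Set.indicator {w : ℝ | R < |w|} kk w) ≤ e := by
  have : Tendsto (fun R : ℝ => ∫ w, (Set.indicator {w : ℝ | R < |w|} kk w)) atTop (𝓝 (∫ w : ℝ, (0:ℝ))) := by
    refine tendsto_integral_filter_of_dominated_convergence kk ?_ ?_ kk_int ?_
    · refine Eventually.of_forall fun R => ?_
      exact (kk_cont.measurable.indicator (measurableSet_lt (by fun_prop) (by fun_prop))).aestronglyMeasurable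
    · refine Eventually.of_forall fun R => Eventually.of_forall fun w => ?_
      refine (norm_indicator_le_norm_self _ _).trans ?_
      rw [Real.norm_of_nonneg (kk_nonneg w)]
    · refine Eventually.of_forall fun w => ?_
      refine tendsto_const_nhds.congr' ?_
      filter_upwards [eventually_ge_atTop |w|] with R hR
      simp [hR]
  rw [integral_zero] at this
  obtain ⟨R, h1, h2⟩ := ((this.eventually (Iic_mem_nhds he)).and (eventually_gt_atTop 0)).exists
  exact ⟨R, h2, h1⟩

lemma bb_slow {u v : ℝ} (hu : 0 < u) (huv : u ≤ v) : (bb u + 1) * Real.exp (u - v) ≤ bb v + 1 := by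
  have hv : 0 < v := hu.trans_le huv
  simp only [bb, hu, hv, if_true]
  have h := Chebyshev.psi_mono (Real.exp_le_exp.2 huv)
  have e : Real.exp (-u) * Real.exp (u - v) = Real.exp (-v) := by rw [← Real.exp_add]; congr 1; ring
  have : (Chebyshev.psi (Real.exp u) * Real.exp (-u) - 1 + 1) * Real.exp (u - v) = Chebyshev.psi (Real.exp u) * Real.exp (-v) := by
    rw [← e]; ring
  rw [this]
  have := mul_le_mul_of_nonneg_right h (Real.exp_pos (-v)).le
  linarith

lemma bb_nn (u : ℝ) : 0 ≤ bb u + 1 := by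
  unfold bb
  split_ifs
  · have := Chebyshev.psi_nonneg (Real.exp u)
    have := Real.exp_pos (-u)
    simp only [sub_add_cancel]
    positivity
  · norm_num

lemma bbk_int (v l : ℝ) : Integrable (fun w => bb (v - w / l) * kk w) := by
  refine Integrable.mono' (kk_int.const_mul 10) ?_ (Eventually.of_forall fun w => ?_)
  · exact ((bb_meas.comp (by fun_prop)).mul kk_cont.measurable).aestronglyMeasurable
  · rw [norm_mul, Real.norm_of_nonneg (kk_nonneg w)]
    exact mul_le_mul_of_nonneg_right (bb_bound _) (kk_nonneg w)

lemma ind_int (R : ℝ) : Integrable (Set.indicator {w : ℝ | R < |w|} kk) :=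
  kk_int.indicator (measurableSet_lt (by fun_prop) (by fun_prop))

lemma bb_eventually (η ε : ℝ) (hη : 0 < η) (hε : 0 < ε) :
    ∀ᶠ v in atTop, bb v + 1 ≤ Real.exp (2*η) * (1 + 21 * ε) ∧ Real.exp (-(2*η)) * (1 - 12 * ε) ≤ bb v + 1 := by
  obtain ⟨R, hR, hRe⟩ := kk_tail ε hε
  have hl : 0 < R / η := by positivity
  have hw : ∀ w : ℝ, ¬ (R < |w|) → |w / (R/η)| ≤ η := by
    intro w hw
    push Not at hw
    rw [abs_div, abs_of_pos hl, div_le_iff₀ hl]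
    field_simp
    exact hw
  have T := smooth_tendsto' _ hl
  have T1 := (T.comp (tendsto_atTop_add_const_right atTop η tendsto_id)).eventually (Iio_mem_nhds hε)
  have T2 := (T.comp (tendsto_atTop_add_const_right atTop (-η) tendsto_id)).eventually
    (Ioi_mem_nhds (neg_lt_zero.2 hε))
  filter_upwards [T1, T2, eventually_gt_atTop (2*η)] with v h1 h2 hv
  simp only [Function.comp, id, Set.mem_Iio, Set.mem_Ioi] at h1 h2
  have hbv := bb_bound v
  rw [abs_le] at hbv
  have hb1 := bb_nn v
  constructor
  · set X := (bb v + 1) * Real.exp (-(2*η)) - 1 with hX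
    have he1 : Real.exp (-(2*η)) ≤ 1 := by rw [Real.exp_le_one_iff]; linarith
    have he0 := Real.exp_pos (-(2*η))
    have hX10 : X ≤ 10 := by rw [hX]; nlinarith
    have : ∫ w, (X * kk w - 20 * Set.indicator {w : ℝ | R < |w|} kk w) ≤ ∫ w, bb (v + η - w / (R/η)) * kk w := by
      refine integral_mono ((kk_int.const_mul X).sub ((ind_int R).const_mul 20)) (bbk_int _ _) fun w => ?_
      simp only
      have hk := kk_nonneg w
      by_cases hc : R < |w|
      · rw [Set.indicator_of_mem (by exact hc)]
        have := bb_bound (v + η - w / (R/η))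
        rw [abs_le] at this
        nlinarith
      · rw [Set.indicator_of_notMem (by exact hc)]
        have h3 := abs_le.1 (hw w hc)
        have h4 := bb_slow (u := v) (v := v + η - w / (R/η)) (by linarith) (by linarith)
        have h5 : Real.exp (-(2*η)) ≤ Real.exp (v - (v + η - w / (R/η))) := by
          rw [Real.exp_le_exp]; linarith
        have h6 : X ≤ bb (v + η - w / (R/η)) := by
          rw [hX]; nlinarith [mul_le_mul_of_nonneg_left h5 hb1]
        nlinarith
    rw [integral_sub (kk_int.const_mul X) ((ind_int R).const_mul 20), integral_const_mul, integral_const_mul, kk_integral] at this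
    have hX2 : X ≤ 21 * ε := by linarith
    have : bb v + 1 = Real.exp (2*η) * (X + 1) := by
      rw [hX, sub_add_cancel, mul_comm, mul_assoc, ← Real.exp_add]; simp
    rw [this]
    have := Real.exp_pos (2*η)
    nlinarith
  · set Y := (bb v + 1) * Real.exp (2*η) - 1 with hY
    have hY1 : -1 ≤ Y := by rw [hY]; have := Real.exp_pos (2*η); nlinarith
    have : ∫ w, bb (v + -η - w / (R/η)) * kk w ≤ ∫ w, (Y * kk w + 11 * Set.indicator {w : ℝ | R < |w|} kk w) := by
      refine integral_mono (bbk_int _ _) ((kk_int.const_mul Y).add ((ind_int R).const_mul 11)) fun w => ?_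
      simp only
      have hk := kk_nonneg w
      by_cases hc : R < |w|
      · rw [Set.indicator_of_mem (by exact hc)]
        have := bb_bound (v + -η - w / (R/η))
        rw [abs_le] at this
        nlinarith
      · rw [Set.indicator_of_notMem (by exact hc)]
        have h3 := abs_le.1 (hw w hc)
        have h4 := bb_slow (u := v + -η - w / (R/η)) (v := v) (by linarith) (by linarith)
        have h5 : Real.exp (-(2*η)) ≤ Real.exp ((v + -η - w / (R/η)) - v) := by
          rw [Real.exp_le_exp]; linarith
        have h7 := mul_le_mul_of_nonneg_left h5 (bb_nn (v + -η - w / (R/η)))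
        have h8 : Real.exp (-(2*η)) * Real.exp (2*η) = 1 := by rw [← Real.exp_add]; simp
        have h6 : bb (v + -η - w / (R/η)) ≤ Y := by
          have := mul_le_mul_of_nonneg_right (h7.trans h4) (Real.exp_pos (2*η)).le
          rw [mul_assoc, h8] at this
          linarith
        nlinarith
    rw [integral_add (kk_int.const_mul Y) ((ind_int R).const_mul 11), integral_const_mul, integral_const_mul, kk_integral] at this
    have hY2 : - (12 * ε) ≤ Y := by linarith
    have : bb v + 1 = Real.exp (-(2*η)) * (Y + 1) := by
      rw [hY, sub_add_cancel, mul_comm, mul_assoc, ← Real.exp_add]; simp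
    rw [this]
    have := Real.exp_pos (-(2*η))
    nlinarith

lemma bb_tendsto : Tendsto (fun v => bb v + 1) atTop (𝓝 1) := by
  have c1 : Tendsto (fun x : ℝ => Real.exp (2*x) * (1 + 21 * x)) (𝓝 0) (𝓝 1) := by
    have : Continuous (fun x : ℝ => Real.exp (2*x) * (1 + 21 * x)) := by fun_prop
    simpa using this.tendsto 0
  have c2 : Tendsto (fun x : ℝ => Real.exp (-(2*x)) * (1 - 12 * x)) (𝓝 0) (𝓝 1) := by
    have : Continuous (fun x : ℝ => Real.exp (-(2*x)) * (1 - 12 * x)) := by fun_prop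
    simpa using this.tendsto 0
  rw [tendsto_order]
  constructor
  · intro a ha
    obtain ⟨x, h1, h2⟩ := (((c2.mono_left nhdsWithin_le_nhds).eventually (Ioi_mem_nhds ha)).and
      (self_mem_nhdsWithin (a := (0:ℝ)) (s := Set.Ioi 0))).exists
    filter_upwards [bb_eventually x x h2 h2] with v hv
    exact lt_of_lt_of_le h1 hv.2
  · intro a ha
    obtain ⟨x, h1, h2⟩ := (((c1.mono_left nhdsWithin_le_nhds).eventually (Iio_mem_nhds ha)).and
      (self_mem_nhdsWithin (a := (0:ℝ)) (s := Set.Ioi 0))).exists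
    filter_upwards [bb_eventually x x h2 h2] with v hv
    exact lt_of_le_of_lt hv.1 h1

/-- prime number theorem -/
theorem pnt_psi : Tendsto (fun x : ℝ => Chebyshev.psi x / x) atTop (𝓝 1) := by
  refine (bb_tendsto.comp Real.tendsto_log_atTop).congr' ?_
  filter_upwards [eventually_gt_atTop 1] with x hx
  have hx0 : 0 < x := by linarith
  simp [bb, Real.log_pos hx, Real.exp_log hx0, Real.exp_neg, div_eq_mul_inv]

theorem pnt_theta : Tendsto (fun x : ℝ => Chebyshev.theta x / x) atTop (𝓝 1) := by
  have h1 : Tendsto (fun x : ℝ => (Chebyshev.psi x - Chebyshev.theta x) / x) atTop (𝓝 0) := by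
    have h := Chebyshev.isBigO_psi_sub_theta_sqrt
    have h2 : (fun x : ℝ => Real.sqrt x) =o[atTop] (fun x : ℝ => x) := by
      refine Asymptotics.isLittleO_of_tendsto' ?_ ?_
      · filter_upwards [eventually_gt_atTop 0] with x hx h
        exact absurd h hx.ne'
      · refine (tendsto_inv_atTop_zero.comp Real.tendsto_sqrt_atTop).congr fun x => ?_
        simp [Real.sqrt_div_self]
    exact (h.trans_isLittleO h2).tendsto_div_nhds_zero
  have := pnt_psi.sub h1
  simp only [sub_zero] at this
  refine this.congr fun x => ?_
  rw [← sub_div]; ring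

end Pf
end

section
open MeasureTheory Filter Topology

namespace Pf

noncomputable def zz : ℝ := (Real.sqrt 11 - 1) / (Real.sqrt 11 + 1)

lemma s11_sq : Real.sqrt 11 * Real.sqrt 11 = 11 := Real.mul_self_sqrt (by norm_num)
lemma s11_lo : 3.3166247903 < Real.sqrt 11 := Real.lt_sqrt_of_sq_lt (by norm_num)
lemma s11_hi : Real.sqrt 11 < 3.3166247904 := by
  rw [Real.sqrt_lt' (by norm_num)]; norm_num
lemma zz_eq : zz = (6 - Real.sqrt 11) / 5 := by
  unfold zz
  have := s11_lo
  rw [div_eq_div_iff (by linarith) (by norm_num)]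
  linear_combination s11_sq
lemma zz_pos : 0 < zz := by rw [zz_eq]; have := s11_hi; linarith
lemma zz_lt : zz < 1 := by rw [zz_eq]; have := s11_lo; linarith

noncomputable def II (ω : ℝ) (n : ℕ) : ℝ := ∫ x in (-1:ℝ)..1, (1 - x^2)^n * Real.cosh (ω * x)

lemma II_rec (ω : ℝ) (n : ℕ) :
    ω^2 * II ω (n+2) + 2*(n+2)*(2*n+3) * II ω (n+1) - 4*(n+2)*(n+1) * II ω n = 0 := by
  have hd : ∀ x : ℝ, HasDerivAt (fun x => (1 - x^2)^(n+2) * (Real.sinh (ω * x) * ω) + 2*(n+2) * x * (1-x^2)^(n+1) * Real.cosh (ω * x))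
      (ω^2 * ((1 - x^2)^(n+2) * Real.cosh (ω * x)) + 2*(n+2)*(2*n+3) * ((1 - x^2)^(n+1) * Real.cosh (ω * x))
        - 4*(n+2)*(n+1) * ((1 - x^2)^n * Real.cosh (ω * x))) x := by
    intro x
    have h1 : HasDerivAt (fun x : ℝ => 1 - x^2) (-(2*x)) x := by
      simpa using (hasDerivAt_pow 2 x).const_sub 1
    have h2 : HasDerivAt (fun x : ℝ => ω * x) ω x := by simpa using (hasDerivAt_id x).const_mul ω
    have h3 := (h1.pow (n+2)).mul (h2.sinh.mul_const ω)
    have h4 := (((hasDerivAt_id x).const_mul (2*((n:ℝ)+2))).mul (h1.pow (n+1))).mul h2.cosh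
    refine (h3.add h4).congr_deriv ?_
    simp only [Pi.pow_apply, Pi.mul_apply, id, Nat.add_sub_cancel, show n + 2 - 1 = n + 1 from rfl]
    push_cast
    ring
  have hi : ∀ m, IntervalIntegrable (fun x : ℝ => (1 - x^2)^m * Real.cosh (ω * x)) volume (-1) 1 :=
    fun m => Continuous.intervalIntegrable (by fun_prop) _ _
  have := intervalIntegral.integral_eq_sub_of_hasDerivAt (a := -1) (b := 1) (fun x _ => hd x)
    (Continuous.intervalIntegrable (by fun_prop) _ _)
  rw [intervalIntegral.integral_sub (((hi _).const_mul _).add ((hi _).const_mul _)) ((hi _).const_mul _),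
    intervalIntegral.integral_add ((hi _).const_mul _) ((hi _).const_mul _)] at this
  simp only [intervalIntegral.integral_const_mul] at this
  unfold II
  rw [this]
  simp

lemma II_zero (ω : ℝ) (hω : ω ≠ 0) : II ω 0 = 2 * Real.sinh ω / ω := by
  have hd : ∀ x : ℝ, HasDerivAt (fun x => Real.sinh (ω * x) / ω) ((1 - x^2)^0 * Real.cosh (ω * x)) x := by
    intro x
    have h2 : HasDerivAt (fun x : ℝ => ω * x) ω x := by simpa using (hasDerivAt_id x).const_mul ω
    refine (h2.sinh.div_const ω).congr_deriv ?_
    field_simp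
  have := intervalIntegral.integral_eq_sub_of_hasDerivAt (a := -1) (b := 1) (fun x _ => hd x)
    (Continuous.intervalIntegrable (by fun_prop) _ _)
  unfold II
  rw [this]
  simp
  ring

lemma II_one (ω : ℝ) (hω : ω ≠ 0) : ω^2 * II ω 1 = 4 * (Real.cosh ω - Real.sinh ω / ω) := by
  have hd : ∀ x : ℝ, HasDerivAt (fun x => (1 - x^2)* (Real.sinh (ω * x) * ω) + 2 * x * Real.cosh (ω * x) - 2 * Real.sinh (ω * x) / ω)
     (ω^2 * ((1 - x^2)^1 * Real.cosh (ω * x))) x := by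
    intro x
    have h1 : HasDerivAt (fun x : ℝ => 1 - x^2) (-(2*x)) x := by
      simpa using (hasDerivAt_pow 2 x).const_sub 1
    have h2 : HasDerivAt (fun x : ℝ => ω * x) ω x := by simpa using (hasDerivAt_id x).const_mul ω
    refine (((h1.mul (h2.sinh.mul_const ω)).add (((hasDerivAt_id x).const_mul 2).mul h2.cosh)).sub ((h2.sinh.const_mul 2).div_const ω)).congr_deriv ?_
    simp only [id]
    field_simp
    ring
  have := intervalIntegral.integral_eq_sub_of_hasDerivAt (a := -1) (b := 1) (fun x _ => hd x)
    (Continuous.intervalIntegrable (by fun_prop) _ _)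
  rw [intervalIntegral.integral_const_mul] at this
  unfold II
  rw [this]
  simp
  ring

lemma II_pos (ω : ℝ) (n : ℕ) : 0 < II ω n := by
  unfold II
  refine intervalIntegral.intervalIntegral_pos_of_pos_on (Continuous.intervalIntegrable (by fun_prop) _ _) ?_ (by norm_num)
  intro x hx
  have : 0 < 1 - x^2 := by nlinarith [hx.1, hx.2]
  have := Real.cosh_pos (ω * x)
  positivity

lemma II_le (ω : ℝ) (n : ℕ) : II ω n ≤ 2 * Real.cosh ω := by
  have : II ω n ≤ ∫ x in (-1:ℝ)..1, Real.cosh ω := by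
    unfold II
    refine intervalIntegral.integral_mono_on (by norm_num) (Continuous.intervalIntegrable (by fun_prop) _ _) (by simp) ?_
    intro x hx
    have h1 : 0 ≤ 1 - x^2 := by nlinarith [hx.1, hx.2]
    have h2 : (1 - x^2)^n ≤ 1 := pow_le_one₀ h1 (by nlinarith)
    have h3 : Real.cosh (ω * x) ≤ Real.cosh ω := by
      rw [Real.cosh_le_cosh, abs_mul]
      exact mul_le_of_le_one_right (abs_nonneg _) (abs_le.2 hx)
    have := Real.cosh_pos (ω * x)
    nlinarith [pow_nonneg h1 n]
  refine this.trans_eq ?_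
  rw [intervalIntegral.integral_const, smul_eq_mul]; ring

theorem alpha_irrational : Irrational (Real.sqrt 11 * Real.log zz) := by
  rintro ⟨r, hr⟩
  have hz := zz_pos
  have hneg : Real.log zz < 0 := Real.log_neg zz_pos zz_lt
  set ω := - Real.log zz with hω
  have hωp : 0 < ω := by linarith
  have h11 := s11_lo
  have hexp : Real.exp ω = (6 + Real.sqrt 11)/5 := by
    rw [hω, Real.exp_neg, Real.exp_log hz, zz_eq, inv_div, div_eq_div_iff (by linarith [s11_hi]) (by norm_num)]
    linear_combination s11_sq
  have hexp2 : Real.exp (-ω) = (6 - Real.sqrt 11)/5 := by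
    rw [hω, neg_neg, Real.exp_log hz, zz_eq]
  have hc : Real.cosh ω = 6/5 := by rw [Real.cosh_eq, hexp, hexp2]; ring
  have hs : Real.sinh ω = Real.sqrt 11/5 := by rw [Real.sinh_eq, hexp, hexp2]; ring
  -- r = -√11 ω
  have hr' : (r:ℝ) = - (Real.sqrt 11 * ω) := by rw [hr, hω]; ring
  set a : ℤ := - r.num
  set b : ℤ := (r.den : ℤ)
  have hb : (0:ℝ) < b := by simp only [b]; exact_mod_cast r.den_pos
  have hab : (a:ℝ) = b * (Real.sqrt 11 * ω) := by
    have : (r:ℝ) * b = - a := by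
      simp only [a, b]; push_cast
      rw [neg_neg]
      exact_mod_cast Rat.mul_den_eq_num r
    rw [hr'] at this; linarith
  have ha : (0:ℝ) < a := by rw [hab]; positivity
  have key : ∀ n : ℕ, (∃ m : ℤ, (5*a:ℝ) * (11*b^2)^n * (ω^(2*n) * II ω n / n.factorial) = m) ∧
      (∃ m : ℤ, (5*a:ℝ) * (11*b^2)^(n+1) * (ω^(2*(n+1)) * II ω (n+1) / (n+1).factorial) = m) := by
    intro n
    induction n with
    | zero =>
      constructor
      · refine ⟨22*b, ?_⟩
        rw [II_zero _ hωp.ne', hs, hab]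
        push_cast
        simp
        field_simp
        linear_combination 2 * s11_sq
      · refine ⟨11*b^2*(24*a-44*b), ?_⟩
        have := II_one _ hωp.ne'
        rw [hs, hc] at this
        simp only [zero_add, mul_one, pow_one, Nat.factorial_one, Nat.cast_one, div_one, this]
        push_cast
        rw [hab]
        field_simp
        linear_combination (-4) * s11_sq
    | succ n ih =>
      refine ⟨ih.2, ?_⟩
      obtain ⟨⟨m1, h1⟩, ⟨m2, h2⟩⟩ := ih
      refine ⟨-(2*(2*n+3)) * (11*b^2) * m2 + 4 * (11 * b^2) * a^2 * m1, ?_⟩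
      have hrec := II_rec ω n
      push_cast
      rw [← h1, ← h2]
      have hX : (11*b^2:ℝ) * ω^2 = a^2 := by
        rw [hab]; linear_combination -(b^2 * ω^2 : ℝ) * s11_sq
      rw [← hX]
      have hI : ω^2 * II ω (n+2) = - (2*(n+2)*(2*n+3) * II ω (n+1)) + 4*(n+2)*(n+1) * II ω n := by linarith
      have e1 : ω^(2*(n+1+1)) * II ω (n+1+1) = ω^(2*n+2) * (- (2*(n+2)*(2*n+3) * II ω (n+1)) + 4*(n+2)*(n+1) * II ω n) := by
        rw [← hI]; ring
      rw [e1]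
      simp only [Nat.factorial_succ]
      push_cast
      have : (n.factorial:ℝ) ≠ 0 := by positivity
      have : (n:ℝ) + 1 ≠ 0 := by positivity
      have : (n:ℝ) + 1 + 1 ≠ 0 := by positivity
      field_simp
      ring
  have hlim : Tendsto (fun n : ℕ => (5*a:ℝ) * (2 * (6/5)) * ((a^2:ℝ)^n / n.factorial)) atTop (𝓝 ((5*a:ℝ) * (2 * (6/5)) * 0)) :=
    (FloorSemiring.tendsto_pow_div_factorial_atTop _).const_mul _
  rw [mul_zero] at hlim
  obtain ⟨n, hn⟩ := (hlim.eventually (Iio_mem_nhds one_pos)).exists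
  obtain ⟨m, hm⟩ := (key n).1
  have hX : (11*b^2:ℝ) * ω^2 = a^2 := by
    rw [hab]; linear_combination -(b^2 * ω^2 : ℝ) * s11_sq
  have e : (5*a:ℝ) * (11*b^2)^n * (ω^(2*n) * II ω n / n.factorial) = 5 * a * II ω n * ((a^2:ℝ)^n / n.factorial) := by
    rw [← hX, mul_pow, pow_mul]; ring
  rw [e] at hm
  have p1 : (0:ℝ) < m := by rw [← hm]; have := II_pos ω n; positivity
  have p2 : (m:ℝ) < 1 := by
    rw [← hm]; refine lt_of_le_of_lt ?_ hn
    have := II_le ω n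
    rw [hc] at this
    gcongr
  have p3 : (0:ℤ) < m := by exact_mod_cast p1
  have p4 : m < (1:ℤ) := by exact_mod_cast p2
  omega

end Pf
end

section
open MeasureTheory Filter Topology Polynomial

namespace Pf

/-- derivative of the binomial polynomial -/
noncomputable def DD (x m : ℕ) : ℝ := (descPochhammer ℝ m).derivative.eval (x:ℝ) / m.factorial

lemma dP_pascal (m : ℕ) : (descPochhammer ℝ (m+1)).comp (X + 1) =
    descPochhammer ℝ (m+1) + C ((m:ℝ)+1) * descPochhammer ℝ m := by
  have h := congrArg (fun p => p.comp (X + 1 : ℝ[X])) (descPochhammer_succ_comp_X_sub_one ℝ m)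
  simp only [comp_assoc, sub_comp, smul_eq_mul, mul_comp, X_comp, one_comp, add_comp, natCast_comp, add_sub_cancel_right, comp_X] at h
  rw [eq_sub_iff_add_eq] at h
  rw [← h]
  simp

lemma DD_pascal (x m : ℕ) : DD (x+1) (m+1) = DD x (m+1) + DD x m := by
  have h := congrArg (fun p => (derivative p).eval (x:ℝ)) (dP_pascal m)
  simp only [derivative_comp, derivative_add, derivative_X, derivative_one, add_zero, one_mul, derivative_mul, derivative_C, zero_mul, zero_add,
    eval_add, eval_mul, eval_C, eval_comp, eval_X, eval_one] at h
  unfold DD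
  push_cast
  rw [h, Nat.factorial_succ]
  push_cast
  field_simp

lemma DD_zero_right (x : ℕ) : DD x 0 = 0 := by simp [DD]

lemma dP_neg_one (m : ℕ) : (descPochhammer ℝ m).eval (-1) = (-1)^m * m.factorial := by
  induction m with
  | zero => simp
  | succ m ih =>
    rw [descPochhammer_succ_eval, ih, Nat.factorial_succ]; push_cast; ring

lemma DD_zero_left (m : ℕ) : DD 0 (m+1) = (-1)^m / (m+1) := by
  unfold DD
  rw [descPochhammer_succ_left]
  simp [derivative_mul, eval_comp, dP_neg_one, Nat.factorial_succ]
  field_simp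

lemma DD_formula (x m : ℕ) : DD x m = ∑ j ∈ Finset.range m, (-1)^j / ((j:ℝ)+1) * ((x.choose (m-1-j) : ℕ) : ℝ) := by
  induction x generalizing m with
  | zero =>
    cases m with
    | zero => simp [DD_zero_right]
    | succ m =>
      rw [DD_zero_left, Finset.sum_range_succ, Finset.sum_eq_zero]
      · simp
      · intro j hj
        have := Finset.mem_range.1 hj
        rw [Nat.choose_eq_zero_of_lt (by omega)]
        simp
  | succ x ih =>
    cases m with
    | zero => simp [DD_zero_right]
    | succ m =>
      rw [DD_pascal, ih, ih, Finset.sum_range_succ, Finset.sum_range_succ, add_right_comm, ← Finset.sum_add_distrib]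
      congr 1
      · refine Finset.sum_congr rfl fun j hj => ?_
        have := Finset.mem_range.1 hj
        obtain ⟨i, hi⟩ : ∃ i, m - 1 - j = i := ⟨_, rfl⟩
        rw [show m + 1 - 1 - j = i + 1 by omega, hi, Nat.choose_succ_succ]
        push_cast; ring
      · simp

lemma lucas_dvd {p x m : ℕ} (hp : p.Prime) (h : x % p < m % p) : p ∣ x.choose m := by
  have := Fact.mk hp
  have := Choose.choose_modEq_choose_mod_mul_choose_div_nat (n := x) (k := m) (p := p)
  rw [Nat.choose_eq_zero_of_lt h, zero_mul] at this
  exact (Nat.modEq_zero_iff_dvd).1 this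

lemma DD_int (M m x : ℕ) (hm : m ≤ M) : ∃ v : ℤ, (Nat.lcmUpto M : ℝ) * DD x m = v ∧
    ∀ p : ℕ, p.Prime → p ∣ Nat.lcmUpto M → x % p < m % p → (p:ℤ) ∣ v := by
  have hd : ∀ j < m, (j+1) ∣ Nat.lcmUpto M := fun j hj => by
    unfold Nat.lcmUpto
    exact Finset.dvd_lcm (f := id) (by simp; omega)
  refine ⟨∑ j ∈ Finset.range m, (-1)^j * ((Nat.lcmUpto M / (j+1) : ℕ) : ℤ) * ((x.choose (m-1-j) : ℕ) : ℤ), ?_, ?_⟩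
  · rw [DD_formula, Finset.mul_sum]
    rw [Int.cast_sum]
    refine Finset.sum_congr rfl fun j hj => ?_
    simp only [Int.cast_mul, Int.cast_natCast, Int.cast_pow, Int.cast_neg, Int.cast_one]
    rw [Nat.cast_div (hd j (Finset.mem_range.1 hj)) (by positivity)]
    push_cast; field_simp
  · intro p hp hpd hx
    refine Finset.dvd_sum fun j hj => ?_
    have hj := Finset.mem_range.1 hj
    by_cases hpj : p ∣ j + 1
    · refine Dvd.dvd.mul_left ?_ _
      rw [Int.natCast_dvd_natCast]
      refine lucas_dvd hp ?_
      obtain ⟨c, hc⟩ := hpj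
      have : m = (m - 1 - j) + p * c := by omega
      rw [this, Nat.add_mul_mod_self_left] at hx
      exact hx
    · refine Dvd.dvd.mul_right (Dvd.dvd.mul_left ?_ _) _
      rw [Int.natCast_dvd_natCast]
      have h1 : p ∣ (j+1) * (Nat.lcmUpto M / (j+1)) := by rwa [Nat.mul_div_cancel' (hd j hj)]
      exact (hp.dvd_mul.1 h1).resolve_left hpj

/-- Newton basis in the variable `s^2` -/
noncomputable def Bp (h : ℕ) : ℝ[X] := ∏ i ∈ Finset.range h, (X - C (((i:ℝ)+1/2)^2))

lemma Bp_comp (h : ℕ) : (Bp h).comp (X^2) = (descPochhammer ℝ (2*h)).comp (X + C ((h:ℝ) - 1/2)) := by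
  induction h with
  | zero => simp [Bp]
  | succ h ih =>
    have e1 : Bp (h+1) = Bp h * (X - C (((h:ℝ)+1/2)^2)) := by rw [Bp, Finset.prod_range_succ]; rfl
    rw [e1, mul_comp, ih, show 2 * (h+1) = 2*h+1+1 by ring, descPochhammer_succ_left, descPochhammer_succ_right]
    simp only [mul_comp, sub_comp, X_comp, C_comp, comp_assoc, natCast_comp, one_comp]
    have e2 : (X + C (((h+1:ℕ):ℝ) - 1/2) - 1 : ℝ[X]) = X + C ((h:ℝ) - 1/2) := by
      rw [add_sub_assoc, ← C_1, ← C_sub]; push_cast; ring_nf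
    rw [e2]
    have e3 : (X ^ 2 - C (((h:ℝ) + 1/2)^2) : ℝ[X]) = (X + C (((h+1:ℕ):ℝ) - 1/2)) * (X + C ((h:ℝ) - 1/2) - ((2*h:ℕ):ℝ[X])) := by
      rw [← C_eq_natCast, add_sub_assoc, ← C_sub]
      have : (((h+1:ℕ):ℝ) - 1/2) = (h:ℝ) + 1/2 := by push_cast; ring
      rw [this]
      have : ((h:ℝ) - 1/2 - ((2*h:ℕ):ℝ)) = -((h:ℝ) + 1/2) := by push_cast; ring
      rw [this, C_neg, C_pow]; ring
    rw [e3]; ring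

lemma Bp_eval (h t : ℕ) : (Bp h).eval (((t:ℝ)+1/2)^2) = (2*h).factorial * ((t+h).choose (2*h) : ℕ) := by
  have := congrArg (fun p => p.eval ((t:ℝ)+1/2)) (Bp_comp h)
  simp only [eval_comp, eval_pow, eval_X, eval_add, eval_C] at this
  rw [this, show (t:ℝ) + 1/2 + (h - 1/2) = ((t+h:ℕ):ℝ) by push_cast; ring, descPochhammer_eval_eq_descFactorial,
    Nat.descFactorial_eq_factorial_mul_choose]
  push_cast; rfl

lemma Bp_deval (h t : ℕ) : ((Bp h).comp (X^2)).derivative.eval ((t:ℝ)+1/2) = (2*h).factorial * DD (t+h) (2*h) := by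
  rw [Bp_comp, derivative_comp]
  simp only [derivative_add, derivative_X, derivative_C, add_zero, one_mul, eval_comp, eval_add, eval_X, eval_C]
  rw [show (t:ℝ) + 1/2 + (h - 1/2) = ((t+h:ℕ):ℝ) by push_cast; ring]
  unfold DD
  field_simp

lemma Bp_monic (h : ℕ) : (Bp h).Monic := monic_prod_of_monic _ _ fun i _ => monic_X_sub_C _
lemma Bp_deg (h : ℕ) : (Bp h).natDegree = h := by
  unfold Bp
  rw [natDegree_prod_of_monic _ _ fun i _ => monic_X_sub_C _]
  simp only [natDegree_X_sub_C]
  simp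

lemma newton (N : ℕ) (q : ℝ[X]) (hq : q.natDegree ≤ N) : ∃ e : ℕ → ℝ, q = ∑ j ∈ Finset.range (N+1), C (e j) * Bp j := by
  induction N generalizing q with
  | zero =>
    refine ⟨fun _ => q.coeff 0, ?_⟩
    rw [eq_C_of_natDegree_le_zero hq]
    simp [Bp]
  | succ N ih =>
    have : (q - C (q.coeff (N+1)) * Bp (N+1)).natDegree ≤ N := by
      rw [natDegree_le_iff_coeff_eq_zero]
      intro i hi
      rw [coeff_sub, coeff_C_mul]
      rcases eq_or_lt_of_le (Nat.succ_le_of_lt hi) with h | h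
      · have hm := (Bp_monic (N+1)).coeff_natDegree
        rw [Bp_deg] at hm
        rw [← h, Nat.succ_eq_add_one, hm]; simp
      · rw [coeff_eq_zero_of_natDegree_lt (p := q) (by omega), coeff_eq_zero_of_natDegree_lt (p := Bp (N+1)) (by rw [Bp_deg]; omega)]
        simp
    obtain ⟨e, he⟩ := ih _ this
    refine ⟨fun j => if j = N+1 then q.coeff (N+1) else e j, ?_⟩
    rw [Finset.sum_range_succ]
    simp only [if_true]
    rw [← sub_eq_iff_eq_add, he]
    refine Finset.sum_congr rfl fun j hj => ?_
    have := Finset.mem_range.1 hj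
    rw [if_neg (by omega)]

/-- triangular systems -/
lemma triang (N : ℕ) (b : ℕ → ℕ → ℤ) (hb1 : ∀ t, b t t = 1) (hb0 : ∀ t j, t < j → b t j = 0) (e f : ℕ → ℝ)
    (hf : ∀ t, f t = ∑ j ∈ Finset.range (N+1), e j * b t j) (m : ℤ) (hm : ∀ t, ∃ v : ℤ, f t = m * v) (T : ℕ)
    (hT : ∀ t < T, f t = 0) : ∀ j ≤ N, (∃ v : ℤ, e j = m * v) ∧ (j < T → e j = 0) := by
  intro j
  induction j using Nat.strong_induction_on with
  | _ j ih =>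
    intro hj
    have h1 : e j = f j - ∑ i ∈ Finset.range j, e i * b j i := by
      rw [hf j, ← Finset.sum_subset (Finset.range_mono (by omega : j + 1 ≤ N + 1)), Finset.sum_range_succ, hb1]
      · simp
      · intro i _ hi
        rw [hb0 j i (by simpa using hi)]; simp
    constructor
    · have : ∀ i ∈ Finset.range j, ∃ v : ℤ, e i = m * v := fun i hi =>
        (ih i (Finset.mem_range.1 hi) (by have := Finset.mem_range.1 hi; omega)).1
      choose! v hv using this
      obtain ⟨u, hu⟩ := hm j
      refine ⟨u - ∑ i ∈ Finset.range j, v i * b j i, ?_⟩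
      rw [h1, hu, Finset.sum_congr rfl fun i hi => by rw [hv i hi]]
      push_cast
      rw [mul_sub, Finset.mul_sum]
      simp only [mul_assoc]
    · intro hjT
      rw [h1, hT j hjT, Finset.sum_eq_zero, sub_zero]
      intro i hi
      have := Finset.mem_range.1 hi
      rw [(ih i this (by omega)).2 (by omega), zero_mul]

end Pf
end

section
open MeasureTheory Filter Topology Polynomial

namespace Pf

noncomputable def qq (h1 h2 h3 : ℕ) : ℝ[X] := Bp h1 * Bp h2 * Bp h3
noncomputable def D0 (h1 h2 h3 : ℕ) : ℝ := (2*h1).factorial * (2*h2).factorial * (2*h3).factorial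
noncomputable def RR (h1 h2 h3 : ℕ) : ℝ[X] := C (D0 h1 h2 h3)⁻¹ * (qq h1 h2 h3).comp (X^2)

lemma D0_pos (h1 h2 h3 : ℕ) : 0 < D0 h1 h2 h3 := by unfold D0; positivity

def ff (h1 h2 h3 t : ℕ) : ℕ := (t+h1).choose (2*h1) * (t+h2).choose (2*h2) * (t+h3).choose (2*h3)
noncomputable def gg (h1 h2 h3 t : ℕ) : ℝ := DD (t+h1) (2*h1) * (t+h2).choose (2*h2) * (t+h3).choose (2*h3)
  + (t+h1).choose (2*h1) * DD (t+h2) (2*h2) * (t+h3).choose (2*h3)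
  + (t+h1).choose (2*h1) * (t+h2).choose (2*h2) * DD (t+h3) (2*h3)

lemma RR_eval (h1 h2 h3 t : ℕ) : (RR h1 h2 h3).eval ((t:ℝ)+1/2) = ff h1 h2 h3 t := by
  simp only [RR, qq, eval_mul, eval_C, eval_comp, eval_pow, eval_X, Bp_eval, ff, D0]
  push_cast
  field_simp

lemma RR_deval (h1 h2 h3 t : ℕ) : (RR h1 h2 h3).derivative.eval ((t:ℝ)+1/2) = gg h1 h2 h3 t := by
  have e : ∀ h, ((Bp h).comp (X^2)).eval ((t:ℝ)+1/2) = (2*h).factorial * ((t+h).choose (2*h) : ℕ) := fun h => by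
    rw [eval_comp]; simp only [eval_pow, eval_X, Bp_eval]
  simp only [RR, qq, mul_comp, derivative_mul, derivative_C, zero_mul, zero_add, eval_mul, eval_add, eval_C, Bp_deval, e, gg, D0]
  field_simp

lemma RR_deval2 (h1 h2 h3 t : ℕ) : (RR h1 h2 h3).derivative.eval ((t:ℝ)+1/2) =
    (D0 h1 h2 h3)⁻¹ * (2*t+1) * (qq h1 h2 h3).derivative.eval (((t:ℝ)+1/2)^2) := by
  simp only [RR, derivative_mul, derivative_C, zero_mul, zero_add, derivative_comp, eval_mul, eval_C, eval_comp, eval_pow, eval_X,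
    derivative_X_pow]
  simp
  ring

lemma choose_odd (t j : ℕ) : (2*(t:ℝ)+1) * ((t+j).choose (2*j) : ℕ) =
    (2*j+1) * ((((t+j+1).choose (2*j+1) : ℕ) : ℝ) + ((t+j).choose (2*j+1) : ℕ)) := by
  have h1 : ((t+j+1).choose (2*j+1) : ℝ) * (2*j+1) = (t+j+1) * (t+j).choose (2*j) := by
    exact_mod_cast (Nat.add_one_mul_choose_eq (t+j) (2*j)).symm
  have h2 : ((t+j).choose (2*j+1) : ℝ) * (2*j+1) = (t+j).choose (2*j) * (t - j) := by
    have := Nat.choose_succ_right_eq (t+j) (2*j)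
    rcases le_or_gt j t with h | h
    · rw [show t + j - 2*j = t - j by omega] at this
      have h3 : (((t+j).choose (2*j+1) * (2*j+1) : ℕ):ℝ) = (((t+j).choose (2*j) * (t-j) : ℕ) : ℝ) := by rw [this]
      push_cast [Nat.cast_sub h] at h3
      exact h3
    · rw [Nat.choose_eq_zero_of_lt (by omega : t + j < 2*j+1), Nat.choose_eq_zero_of_lt (by omega : t + j < 2*j)]
      simp
  linear_combination -h1 - h2

lemma qq_deg (h1 h2 h3 : ℕ) : (qq h1 h2 h3).natDegree = h1 + h2 + h3 := by
  unfold qq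
  rw [Monic.natDegree_mul ((Bp_monic h1).mul (Bp_monic h2)) (Bp_monic h3), Monic.natDegree_mul (Bp_monic h1) (Bp_monic h2),
    Bp_deg, Bp_deg, Bp_deg]

lemma ff_expand (h1 h2 h3 : ℕ) : ∃ e : ℕ → ℝ, ∀ t, (ff h1 h2 h3 t : ℝ) =
    ∑ j ∈ Finset.range (h1+h2+h3+1), e j * (((t+j).choose (2*j) : ℕ) : ℤ) := by
  obtain ⟨e, he⟩ := newton (h1+h2+h3) (qq h1 h2 h3) (qq_deg _ _ _).le
  refine ⟨fun j => (D0 h1 h2 h3)⁻¹ * e j * (2*j).factorial, fun t => ?_⟩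
  rw [← RR_eval]
  simp only [RR, eval_mul, eval_C, eval_comp, eval_pow, eval_X]
  rw [he, eval_finsetSum, Finset.mul_sum]
  refine Finset.sum_congr rfl fun j hj => ?_
  rw [eval_mul, eval_C, Bp_eval]
  push_cast; ring

lemma gg_expand (h1 h2 h3 : ℕ) : ∃ e : ℕ → ℝ, ∀ t, gg h1 h2 h3 t =
    ∑ j ∈ Finset.range (h1+h2+h3+1), e j * ((((t+j+1).choose (2*j+1) : ℕ) + ((t+j).choose (2*j+1) : ℕ) : ℤ) : ℝ) := by
  obtain ⟨e, he⟩ := newton (h1+h2+h3) (qq h1 h2 h3).derivative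
    ((natDegree_derivative_le _).trans (by rw [qq_deg]; omega))
  refine ⟨fun j => (D0 h1 h2 h3)⁻¹ * e j * (2*j).factorial * (2*j+1), fun t => ?_⟩
  rw [← RR_deval, RR_deval2, he, eval_finsetSum, Finset.mul_sum]
  refine Finset.sum_congr rfl fun j hj => ?_
  rw [eval_mul, eval_C, Bp_eval]
  have := choose_odd t j
  push_cast
  linear_combination (D0 h1 h2 h3)⁻¹ * e j * (2*j).factorial * this

lemma ff_zero {h1 h2 h3 t : ℕ} (ht : t < h1) : ff h1 h2 h3 t = 0 := by
  unfold ff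
  rw [Nat.choose_eq_zero_of_lt (by omega)]; simp

lemma gg_zero {h1 h2 h3 t : ℕ} (ht : t < h2) (h21 : h2 ≤ h1) : gg h1 h2 h3 t = 0 := by
  unfold gg
  rw [Nat.choose_eq_zero_of_lt (by omega : t + h1 < 2*h1), Nat.choose_eq_zero_of_lt (by omega : t + h2 < 2*h2)]; simp

lemma hs_cast {f g : ℕ → ℝ} {a b : ℝ} (h : HasSum f a) (hf : ∀ t, g t = f t) (hab : b = a) : HasSum g b := by
  rw [hab, show g = f from funext hf]; exact h

lemma hs_even (z : ℝ) (hz : 0 < z) (hz1 : z < 1) (j : ℕ) :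
    HasSum (fun t : ℕ => (((t+j).choose (2*j) : ℕ) : ℝ) * z^t) ((z/(1-z)^2)^j / (1-z)) := by
  have h1 : 0 < 1 - z := by linarith
  have h := hasSum_choose_mul_geometric_of_norm_lt_one (2*j) (r := z) (by rwa [Real.norm_of_nonneg hz.le])
  have h2 := h.mul_left (z^j)
  rw [← hasSum_nat_add_iff' j, Finset.sum_eq_zero]
  · refine hs_cast h2 ?_ ?_
    · intro t
      rw [show t + j + j = t + 2*j by ring]; ring
    · rw [div_pow, ← pow_mul, pow_succ, sub_zero]; field_simp
  · intro t ht
    rw [Nat.choose_eq_zero_of_lt (by have := Finset.mem_range.1 ht; omega)]; simp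

lemma hs_odd1 (z : ℝ) (hz : 0 < z) (hz1 : z < 1) (j : ℕ) :
    HasSum (fun t : ℕ => (((t+j+1).choose (2*j+1) : ℕ) : ℝ) * z^t) (z^j / (1-z)^(2*j+2)) := by
  have h1 : 0 < 1 - z := by linarith
  have h := hasSum_choose_mul_geometric_of_norm_lt_one (2*j+1) (r := z) (by rwa [Real.norm_of_nonneg hz.le])
  have h2 := h.mul_left (z^j)
  rw [← hasSum_nat_add_iff' j, Finset.sum_eq_zero]
  · refine hs_cast h2 ?_ ?_
    · intro t
      rw [show t + j + j + 1 = t + (2*j+1) by ring]; ring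
    · ring
  · intro t ht
    rw [Nat.choose_eq_zero_of_lt (by have := Finset.mem_range.1 ht; omega)]; simp

lemma hs_odd2 (z : ℝ) (hz : 0 < z) (hz1 : z < 1) (j : ℕ) :
    HasSum (fun t : ℕ => (((t+j).choose (2*j+1) : ℕ) : ℝ) * z^t) (z * (z^j / (1-z)^(2*j+2))) := by
  rw [← hasSum_nat_add_iff' 1]
  refine hs_cast ((hs_odd1 z hz hz1 j).mul_left z) ?_ ?_
  · intro t
    rw [show t + 1 + j = t + j + 1 by ring]; ring
  · rw [Finset.sum_range_one, Nat.choose_eq_zero_of_lt (by omega)]; simp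

lemma hs_odd (z : ℝ) (hz : 0 < z) (hz1 : z < 1) (j : ℕ) :
    HasSum (fun t : ℕ => ((((t+j+1).choose (2*j+1) : ℕ) + ((t+j).choose (2*j+1) : ℕ) : ℤ) : ℝ) * z^t)
      ((z/(1-z)^2)^j * ((1+z)/(1-z)^2)) := by
  have h1 : 0 < 1 - z := by linarith
  refine hs_cast ((hs_odd1 z hz hz1 j).add (hs_odd2 z hz hz1 j)) ?_ ?_
  · intro t; push_cast; ring
  · rw [div_pow, ← pow_mul]; field_simp; ring

/-- sum of an expansion times the denominator is an integer -/
lemma combine (N T d P : ℕ) (hP : 0 < P) (hd : 0 < d) (e : ℕ → ℝ)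
    (he : ∀ j ≤ N, (∃ v : ℤ, d * e j = (P:ℤ) * v) ∧ (j < T → d * e j = 0)) :
    ∃ X : ℤ, (d:ℝ) * 2^N / (5^T * P) * (∑ j ∈ Finset.range (N+1), e j * (5/2:ℝ)^j) = X := by
  have : ∀ j ∈ Finset.range (N+1), ∃ X : ℤ, (d:ℝ) * 2^N / (5^T * P) * (e j * (5/2:ℝ)^j) = X := by
    intro j hj
    have hj : j ≤ N := by have := Finset.mem_range.1 hj; omega
    obtain ⟨⟨v, hv⟩, h0⟩ := he j hj
    rcases lt_or_ge j T with h | h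
    · refine ⟨0, ?_⟩
      have : e j = 0 := by
        have := h0 h
        have hd' : (d:ℝ) ≠ 0 := by positivity
        simpa [hd'] using this
      rw [this]; simp
    · refine ⟨v * 2^(N-j) * 5^(j-T), ?_⟩
      obtain ⟨a, rfl⟩ := Nat.exists_eq_add_of_le h
      obtain ⟨b, rfl⟩ := Nat.exists_eq_add_of_le hj
      rw [show T + a + b - (T + a) = b by omega, show T + a - T = a by omega]
      push_cast at hv ⊢
      have hP' : (P:ℝ) ≠ 0 := by positivity
      calc _ = ((d:ℝ) * e (T+a)) * 2^(T+a+b) / (5^T * P) * (5/2:ℝ)^(T+a) := by ring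
        _ = _ := by rw [hv, div_pow, pow_add, pow_add 5, pow_add]; field_simp
  choose! X hX using this
  refine ⟨∑ j ∈ Finset.range (N+1), X j, ?_⟩
  rw [Finset.mul_sum, Finset.sum_congr rfl hX]
  push_cast; rfl

theorem arith (h1 h2 h3 d P : ℕ) (h21 : h2 ≤ h1) (hP : 0 < P) (hd : 0 < d) (z : ℝ) (hz : 0 < z) (hz1 : z < 1)
    (hw : z/(1-z)^2 = 5/2)
    (hf : ∀ t, ∃ v : ℤ, (d:ℝ) * ff h1 h2 h3 t = (P:ℤ) * v) (hg : ∀ t, ∃ v : ℤ, (d:ℝ) * gg h1 h2 h3 t = (P:ℤ) * v) :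
    Summable (fun t => (ff h1 h2 h3 t : ℝ) * z^t) ∧ Summable (fun t => gg h1 h2 h3 t * z^t) ∧
    (∃ X : ℤ, (d:ℝ) * 2^(h1+h2+h3) / (5^h2 * P) * ((1-z) * ∑' t, (ff h1 h2 h3 t : ℝ) * z^t) = X) ∧
    (∃ X : ℤ, (d:ℝ) * 2^(h1+h2+h3) / (5^h2 * P) * ((1-z)^2/(1+z) * ∑' t, gg h1 h2 h3 t * z^t) = X) := by
  obtain ⟨e, he⟩ := ff_expand h1 h2 h3
  obtain ⟨a, ha⟩ := gg_expand h1 h2 h3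
  have h1z : 0 < 1 - z := by linarith
  have S1 : HasSum (fun t => (ff h1 h2 h3 t : ℝ) * z^t) (∑ j ∈ Finset.range (h1+h2+h3+1), e j * ((5/2)^j / (1-z))) := by
    have : (fun t => (ff h1 h2 h3 t : ℝ) * z^t) = fun t => ∑ j ∈ Finset.range (h1+h2+h3+1), e j * ((((t+j).choose (2*j) : ℕ) : ℝ) * z^t) := by
      funext t; rw [he, Finset.sum_mul]; push_cast; simp only [mul_assoc]
    rw [this]
    refine hasSum_sum fun j _ => ?_
    have := (hs_even z hz hz1 j).mul_left (e j)
    rwa [hw] at this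
  have S2 : HasSum (fun t => gg h1 h2 h3 t * z^t) (∑ j ∈ Finset.range (h1+h2+h3+1), a j * ((5/2)^j * ((1+z)/(1-z)^2))) := by
    have : (fun t => gg h1 h2 h3 t * z^t) = fun t => ∑ j ∈ Finset.range (h1+h2+h3+1), a j *
        (((((t+j+1).choose (2*j+1) : ℕ) + ((t+j).choose (2*j+1) : ℕ) : ℤ) : ℝ) * z^t) := by
      funext t; rw [ha, Finset.sum_mul]; simp only [mul_assoc]
    rw [this]
    refine hasSum_sum fun j _ => ?_
    have := (hs_odd z hz hz1 j).mul_left (a j)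
    rwa [hw] at this
  refine ⟨S1.summable, S2.summable, ?_, ?_⟩
  · obtain ⟨X, hX⟩ := combine (h1+h2+h3) h2 d P hP hd e (triang _ (fun t j => (((t+j).choose (2*j) : ℕ) : ℤ))
      (fun t => by simp [← two_mul]) (fun t j h => by rw [Nat.choose_eq_zero_of_lt (by omega)]; simp) (fun j => d * e j)
      (fun t => d * ff h1 h2 h3 t) (fun t => by simp only [he, Finset.mul_sum, mul_assoc]) P hf h2
      (fun t ht => by rw [ff_zero (by omega)]; simp))
    refine ⟨X, ?_⟩
    rw [← hX, S1.tsum_eq, Finset.mul_sum]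
    congr 1
    refine Finset.sum_congr rfl fun j _ => ?_
    field_simp
  · obtain ⟨X, hX⟩ := combine (h1+h2+h3) h2 d P hP hd a (triang _
      (fun t j => (((t+j+1).choose (2*j+1) : ℕ) + ((t+j).choose (2*j+1) : ℕ) : ℤ))
      (fun t => by simp [← two_mul]) (fun t j h => by
        rw [Nat.choose_eq_zero_of_lt (by omega), Nat.choose_eq_zero_of_lt (by omega)]; simp) (fun j => d * a j)
      (fun t => d * gg h1 h2 h3 t) (fun t => by simp only [ha, Finset.mul_sum, mul_assoc]) P hg h2
      (fun t ht => by rw [gg_zero ht h21]; simp))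
    refine ⟨X, ?_⟩
    rw [← hX, S2.tsum_eq, Finset.mul_sum]
    congr 1
    refine Finset.sum_congr rfl fun j _ => ?_
    field_simp

end Pf
end

section
open MeasureTheory Filter Topology

namespace Pf

lemma mod_split (m p b : ℕ) (hp : 0 < p) (h : m < b * p) : ∃ c < b, m = c * p + m % p ∧ m % p < p := by
  refine ⟨m / p, ?_, ?_, Nat.mod_lt _ hp⟩
  · rwa [Nat.div_lt_iff_lt_mul hp]
  · rw [mul_comm]; exact (Nat.div_add_mod m p).symm

lemma gain0 (p r y : ℕ) (hr : r < p) (hy : y < p)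
    (h : (p ≤ 6*r ∧ 7*r < 3*p) ∨ (p ≤ 2*r ∧ 7*r < 5*p) ∨ (3*p ≤ 4*r ∧ 7*r < 6*p)) :
    (y+2*r)%p < (7*r)%p ∨ (y+r)%p < (5*r)%p ∨ y < (3*r)%p := by
  have hp : 0 < p := by omega
  by_contra! hc
  obtain ⟨c1, hc1, e1, l1⟩ := mod_split (3*r) p 3 hp (by omega)
  obtain ⟨c2, hc2, e2, l2⟩ := mod_split (5*r) p 5 hp (by omega)
  obtain ⟨c3, hc3, e3, l3⟩ := mod_split (7*r) p 7 hp (by omega)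
  obtain ⟨c4, hc4, e4, l4⟩ := mod_split (y+r) p 2 hp (by omega)
  obtain ⟨c5, hc5, e5, l5⟩ := mod_split (y+2*r) p 3 hp (by omega)
  generalize (3*r) % p = s1 at *
  generalize (5*r) % p = s2 at *
  generalize (7*r) % p = s3 at *
  generalize (y+r) % p = s4 at *
  generalize (y+2*r) % p = s5 at *
  rcases h with h | h | h <;> interval_cases c1 <;> (try omega) <;> interval_cases c2 <;> (try omega) <;>
    interval_cases c3 <;> (try omega) <;> interval_cases c4 <;> (try omega) <;> interval_cases c5 <;> omega

lemma gain (p n X i : ℕ) (hp : 0 < p)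
    (h : ((6*i+1)*p ≤ 6*n ∧ 7*n < (7*i+3)*p) ∨ ((2*i+1)*p ≤ 2*n ∧ 7*n < (7*i+5)*p) ∨ ((4*i+3)*p ≤ 4*n ∧ 7*n < (7*i+6)*p)) :
    (X+2*n)%p < (7*n)%p ∨ (X+n)%p < (5*n)%p ∨ X%p < (3*n)%p := by
  obtain ⟨r, rfl⟩ : ∃ r, n = i*p + r := by
    refine Nat.exists_eq_add_of_le ?_
    rcases h with h | h | h <;> nlinarith
  have hr : r < p := by rcases h with h | h | h <;> nlinarith
  have := gain0 p r (X%p) hr (Nat.mod_lt _ hp) (by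
    rcases h with ⟨h, h'⟩ | ⟨h, h'⟩ | ⟨h, h'⟩
    · left; constructor <;> nlinarith
    · right; left; constructor <;> nlinarith
    · right; right; constructor <;> nlinarith)
  have e1 : (X + 2*(i*p+r)) % p = (X%p + 2*r)%p := by
    rw [show X + 2*(i*p+r) = (X + 2*r) + (2*i)*p by ring, Nat.add_mul_mod_self_right]; simp [Nat.add_mod]
  have e2 : (X + (i*p+r)) % p = (X%p + r)%p := by
    rw [show X + (i*p+r) = (X + r) + i*p by ring, Nat.add_mul_mod_self_right]; simp [Nat.add_mod]
  have e3 : ∀ c, (c*(i*p+r)) % p = (c*r)%p := fun c => by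
    rw [show c*(i*p+r) = c*r + (c*i)*p by ring, Nat.add_mul_mod_self_right]
  rw [e1, e2, e3, e3, e3]
  exact this

noncomputable def la : Fin 3 → ℝ := ![1/6, 1/2, 3/4]
noncomputable def lb : Fin 3 → ℝ := ![3/7, 5/7, 6/7]
lemma la_pos (c : Fin 3) : 0 < la c := by fin_cases c <;> simp [la]
lemma la_lt (c : Fin 3) : la c < lb c := by fin_cases c <;> simp [la, lb] <;> norm_num
lemma lb_lt (c : Fin 3) : lb c < 1 := by fin_cases c <;> simp [lb] <;> norm_num

noncomputable def pset (N : ℝ) (x : ℕ × Fin 3) : Finset ℕ :=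
  (Finset.Ioc ⌊N/(x.1 + lb x.2)⌋₊ ⌊N/(x.1 + la x.2)⌋₊).filter Nat.Prime
noncomputable def idx (K : ℕ) : Finset (ℕ × Fin 3) := Finset.range K ×ˢ Finset.univ
noncomputable def PP (N : ℝ) (K : ℕ) : ℕ := ∏ x ∈ idx K, ∏ p ∈ pset N x, p

lemma mem_pset {N : ℝ} (hN : 0 ≤ N) {x : ℕ × Fin 3} {p : ℕ} (h : p ∈ pset N x) :
    p.Prime ∧ (x.1 + la x.2) * p ≤ N ∧ N < (x.1 + lb x.2) * p := by
  have ha := la_pos x.2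
  have hb := la_lt x.2
  simp only [pset, Finset.mem_filter, Finset.mem_Ioc] at h
  obtain ⟨⟨h1, h2⟩, h3⟩ := h
  have p1 : (0:ℝ) < x.1 + la x.2 := by positivity
  have p2 : (0:ℝ) < x.1 + lb x.2 := by linarith
  refine ⟨h3, ?_, ?_⟩
  · rw [Nat.le_floor_iff (by positivity), le_div_iff₀ p1] at h2; linarith
  · rw [Nat.floor_lt (by positivity), div_lt_iff₀ p2] at h1; linarith

lemma pset_disj (N : ℝ) (hN : 0 ≤ N) (x y : ℕ × Fin 3) (hxy : x ≠ y) : Disjoint (pset N x) (pset N y) := by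
  rw [Finset.disjoint_left]
  intro p hx hy
  obtain ⟨hp, h1, h2⟩ := mem_pset hN hx
  obtain ⟨-, h3, h4⟩ := mem_pset hN hy
  have hp0 : (0:ℝ) < p := by exact_mod_cast hp.pos
  have a1 := lt_of_mul_lt_mul_right (h1.trans_lt h4) hp0.le
  have a2 := lt_of_mul_lt_mul_right (h3.trans_lt h2) hp0.le
  have := lb_lt x.2
  have := lb_lt y.2
  have := la_pos x.2
  have := la_pos y.2
  have e : x.1 = y.1 := by
    have b1 : (x.1:ℝ) < y.1 + 1 := by linarith
    have b2 : (y.1:ℝ) < x.1 + 1 := by linarith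
    have b1 : x.1 < y.1 + 1 := by exact_mod_cast b1
    have b2 : y.1 < x.1 + 1 := by exact_mod_cast b2
    omega
  rw [e] at a1 a2
  have c1 : la x.2 < lb y.2 := by linarith
  have c2 : la y.2 < lb x.2 := by linarith
  apply hxy
  refine Prod.ext e ?_
  generalize x.2 = c at *
  generalize y.2 = c' at *
  fin_cases c <;> fin_cases c' <;> simp [la, lb] at c1 c2 ⊢ <;> linarith

lemma PP_pos (N : ℝ) (K : ℕ) : 0 < PP N K := by
  unfold PP
  refine Finset.prod_pos fun x _ => Finset.prod_pos fun p hp => ?_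
  exact (Finset.mem_filter.1 hp).2.pos

lemma PP_dvd (N : ℝ) (hN : 0 ≤ N) (K : ℕ) (v : ℤ) (h : ∀ x ∈ idx K, ∀ p ∈ pset N x, (p:ℤ) ∣ v) : (PP N K : ℤ) ∣ v := by
  have : PP N K = ∏ p ∈ (idx K).biUnion (pset N), p := by
    rw [Finset.prod_biUnion (fun x _ y _ hxy => pset_disj N hN x y hxy)]; rfl
  rw [this]
  rw [Int.natCast_dvd]
  refine Finset.prod_primes_dvd _ ?_ ?_
  · intro p hp
    obtain ⟨x, hx, hp⟩ := Finset.mem_biUnion.1 hp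
    exact (mem_pset hN hp).1.prime
  · intro p hp
    obtain ⟨x, hx, hp⟩ := Finset.mem_biUnion.1 hp
    exact Int.natCast_dvd.1 (h x hx p hp)

lemma theta_diff {x y : ℝ} (h : x ≤ y) : ∑ p ∈ (Finset.Ioc ⌊x⌋₊ ⌊y⌋₊).filter Nat.Prime, Real.log p
    = Chebyshev.theta y - Chebyshev.theta x := by
  unfold Chebyshev.theta
  rw [eq_sub_iff_add_eq, ← Finset.sum_union]
  · rw [← Finset.filter_union, Finset.union_comm, Finset.Ioc_union_Ioc_eq_Ioc (Nat.zero_le _) (Nat.floor_mono h)]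
  · rw [Finset.disjoint_left]
    intro p hp hq
    simp at hp hq; omega

lemma log_PP (N : ℝ) (hN : 0 ≤ N) (K : ℕ) : Real.log (PP N K) =
    ∑ x ∈ idx K, (Chebyshev.theta (N/(x.1 + la x.2)) - Chebyshev.theta (N/(x.1 + lb x.2))) := by
  unfold PP
  push_cast
  rw [Real.log_prod]
  · refine Finset.sum_congr rfl fun x _ => ?_
    have ha := la_pos x.2
    have hb := la_lt x.2
    rw [← theta_diff (by gcongr), Real.log_prod]
    · rfl
    · intro p hp
      have := (Finset.mem_filter.1 hp).2.pos
      positivity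
  · intro x _
    rw [Finset.prod_ne_zero_iff]
    intro p hp
    have := (Finset.mem_filter.1 hp).2.pos
    positivity

noncomputable def MK (K : ℕ) : ℝ := ∑ x ∈ idx K, (1/(x.1 + la x.2) - 1/(x.1 + lb x.2))

lemma theta_scale (s : ℝ) (hs : 0 < s) : Tendsto (fun N : ℝ => Chebyshev.theta (N/s) / N) atTop (𝓝 (1/s)) := by
  have h := (pnt_theta.comp (tendsto_id.atTop_div_const hs)).mul_const (1/s)
  rw [one_mul] at h
  refine h.congr fun N => ?_
  simp only [Function.comp, id]
  field_simp

lemma PP_tendsto (K : ℕ) : Tendsto (fun N : ℝ => Real.log (PP N K) / N) atTop (𝓝 (MK K)) := by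
  have : Tendsto (fun N : ℝ => ∑ x ∈ idx K, (Chebyshev.theta (N/(x.1 + la x.2)) / N - Chebyshev.theta (N/(x.1 + lb x.2)) / N)) atTop (𝓝 (MK K)) := by
    refine tendsto_finsetSum _ fun x _ => ?_
    have ha := la_pos x.2
    have hb := la_lt x.2
    exact (theta_scale _ (by positivity)).sub (theta_scale _ (by have : (0:ℝ) ≤ x.1 := by positivity
                                                                 linarith))
  refine this.congr' ?_
  filter_upwards [eventually_ge_atTop 0] with N hN
  rw [log_PP N hN, Finset.sum_div]
  simp only [sub_div]

lemma lcm_tendsto : Tendsto (fun k : ℕ => Real.log (Nat.lcmUpto (700*k)) / (100*k:ℝ)) atTop (𝓝 7) := by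
  have h1 : Tendsto (fun k : ℕ => 700 * (k:ℝ)) atTop atTop :=
    tendsto_natCast_atTop_atTop.const_mul_atTop (by norm_num)
  have h := (pnt_psi.comp h1).mul_const 7
  rw [one_mul] at h
  refine h.congr fun k => ?_
  have := Chebyshev.psi_eq_log_lcmUpto (700*k)
  push_cast at this
  simp only [Function.comp]
  rw [this]
  rcases Nat.eq_zero_or_pos k with rfl | hk
  · simp
  · field_simp; ring

lemma gain_all (k K : ℕ) (x : ℕ × Fin 3) (p : ℕ) (hp : p ∈ pset (100*k:ℝ) x) :
    p.Prime ∧ p ∣ Nat.lcmUpto (700*k) ∧ ∀ t, (t+350*k)%p < (2*(350*k))%p ∨ (t+250*k)%p < (2*(250*k))%p ∨ (t+150*k)%p < (2*(150*k))%p := by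
  obtain ⟨h1, h2, h3⟩ := mem_pset (by positivity) hp
  obtain ⟨i, c⟩ := x
  simp only at h2 h3
  refine ⟨h1, ?_, ?_⟩
  · unfold Nat.lcmUpto
    refine Finset.dvd_lcm (f := id) (Finset.mem_Icc.2 ⟨h1.pos, ?_⟩)
    have ha : 1/6 ≤ la c := by fin_cases c <;> simp [la] <;> norm_num
    have h4 : (1/6:ℝ) * p ≤ 100*k := by
      refine le_trans ?_ h2
      have : (0:ℝ) ≤ i := by positivity
      gcongr; linarith
    have : (p:ℝ) ≤ (700*k:ℕ) := by push_cast; linarith [(by positivity : (0:ℝ) ≤ k)]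
    exact_mod_cast this
  · intro t
    have := gain p (100*k) (t+150*k) i h1.pos (by
      fin_cases c
      · left
        simp [la, lb] at h2 h3
        constructor
        · have : (6*(i:ℝ)+1)*p ≤ 6*(100*k) := by linarith
          exact_mod_cast this
        · have : 7*(100*(k:ℝ)) < (7*i+3)*p := by linarith
          exact_mod_cast this
      · right; left
        simp [la, lb] at h2 h3
        constructor
        · have : (2*(i:ℝ)+1)*p ≤ 2*(100*k) := by linarith
          exact_mod_cast this
        · have : 7*(100*(k:ℝ)) < (7*i+5)*p := by linarith
          exact_mod_cast this
      · right; right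
        simp [la, lb] at h2 h3
        constructor
        · have : (4*(i:ℝ)+3)*p ≤ 4*(100*k) := by linarith
          exact_mod_cast this
        · have : 7*(100*(k:ℝ)) < (7*i+6)*p := by linarith
          exact_mod_cast this)
    rw [show t + 350*k = t + 150*k + 2*(100*k) by ring, show t + 250*k = t + 150*k + 100*k by ring,
      show 2*(350*k) = 7*(100*k) by ring, show 2*(250*k) = 5*(100*k) by ring, show 2*(150*k) = 3*(100*k) by ring]
    exact this

lemma ff_dvd (k K t : ℕ) : ∃ v : ℤ, (Nat.lcmUpto (700*k) : ℝ) * ff (350*k) (250*k) (150*k) t = (PP (100*k:ℝ) K : ℤ) * v := by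
  have : (PP (100*k:ℝ) K : ℤ) ∣ ((Nat.lcmUpto (700*k) * ff (350*k) (250*k) (150*k) t : ℕ) : ℤ) := by
    refine PP_dvd _ (by positivity) _ _ fun x hx p hp => ?_
    obtain ⟨h1, h2, h3⟩ := gain_all k K x p hp
    rw [Int.natCast_dvd_natCast]
    exact h2.mul_right _
  obtain ⟨v, hv⟩ := this
  refine ⟨v, ?_⟩
  exact_mod_cast congrArg (Int.cast : ℤ → ℝ) hv

lemma gg_dvd (k K t : ℕ) : ∃ v : ℤ, (Nat.lcmUpto (700*k) : ℝ) * gg (350*k) (250*k) (150*k) t = (PP (100*k:ℝ) K : ℤ) * v := by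
  obtain ⟨v1, e1, d1⟩ := DD_int (700*k) (2*(350*k)) (t+350*k) (by omega)
  obtain ⟨v2, e2, d2⟩ := DD_int (700*k) (2*(250*k)) (t+250*k) (by omega)
  obtain ⟨v3, e3, d3⟩ := DD_int (700*k) (2*(150*k)) (t+150*k) (by omega)
  set C1 := (t+350*k).choose (2*(350*k)) with hC1
  set C2 := (t+250*k).choose (2*(250*k)) with hC2
  set C3 := (t+150*k).choose (2*(150*k)) with hC3
  have : (PP (100*k:ℝ) K : ℤ) ∣ v1 * C2 * C3 + C1 * v2 * C3 + C1 * C2 * v3 := by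
    refine PP_dvd _ (by positivity) _ _ fun x hx p hp => ?_
    obtain ⟨h1, h2, h3⟩ := gain_all k K x p hp
    rcases h3 t with h | h | h
    · have a := d1 p h1 h2 h
      have b : (p:ℤ) ∣ C1 := Int.natCast_dvd_natCast.2 (lucas_dvd h1 h)
      exact dvd_add (dvd_add ((a.mul_right _).mul_right _) ((b.mul_right _).mul_right _)) ((b.mul_right _).mul_right _)
    · have a := d2 p h1 h2 h
      have b : (p:ℤ) ∣ C2 := Int.natCast_dvd_natCast.2 (lucas_dvd h1 h)
      exact dvd_add (dvd_add ((b.mul_left _).mul_right _) ((a.mul_left _).mul_right _)) ((b.mul_left _).mul_right _)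
    · have a := d3 p h1 h2 h
      have b : (p:ℤ) ∣ C3 := Int.natCast_dvd_natCast.2 (lucas_dvd h1 h)
      exact dvd_add (dvd_add (b.mul_left _) (b.mul_left _)) (a.mul_left _)
  obtain ⟨v, hv⟩ := this
  refine ⟨v, ?_⟩
  have hv := congrArg (Int.cast : ℤ → ℝ) hv
  push_cast at hv ⊢
  rw [← hv, ← e1, ← e2, ← e3]
  unfold gg
  ring

end Pf
end

section
open MeasureTheory Filter Topology Complex

namespace Pf

noncomputable def YY (x : ℝ) : ℝ := (Real.log x - Real.log (1 - x)) / (2 * Real.pi)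

lemma YY_meas : Measurable YY := by unfold YY; fun_prop

lemma sinh_base (l : ℝ) (hl : l < 0) : (l/2) / Real.sinh (l/2) = -l * (Real.exp (l/2) / (1 - Real.exp l)) := by
  have h1 : Real.exp l = Real.exp (l/2) * Real.exp (l/2) := by rw [← Real.exp_add]; ring_nf
  have h2 : Real.exp (l/2) < 1 := by rw [Real.exp_lt_one_iff]; linarith
  have h3 := Real.exp_pos (l/2)
  rw [Real.sinh_eq, Real.exp_neg, h1]
  have h4 : 1 - Real.exp (l/2) * Real.exp (l/2) ≠ 0 := by nlinarith
  have h5 : Real.exp (l/2) - (Real.exp (l/2))⁻¹ ≠ 0 := by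
    have : 1 < (Real.exp (l/2))⁻¹ := (one_lt_inv₀ h3).2 h2
    linarith
  rw [div_eq_iff (div_ne_zero h5 (by norm_num))]
  generalize Real.exp (l/2) = E at *
  have h6 : (1 - E * E)⁻¹ * (1 - E * E) = 1 := inv_mul_cancel₀ h4
  have h7 : E * E⁻¹ = 1 := mul_inv_cancel₀ h3.ne'
  rw [div_eq_mul_inv E]
  linear_combination (-l/2) * h6 - (l/2) * (1 - E*E)⁻¹ * h7

lemma beta_base (l : ℝ) (hl : l < 0) :
    ∫ x in Set.Ioo (0:ℝ) 1, cexp ((YY x : ℂ) * I * l) = ((-l * (Real.exp (l/2) / (1 - Real.exp l)) : ℝ) : ℂ) := by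
  set a : ℂ := ((l / (2*Real.pi) : ℝ) : ℂ) * I with ha
  have hpi := Real.pi_pos
  have e1 : ∫ x in Set.Ioo (0:ℝ) 1, cexp ((YY x : ℂ) * I * l) = Complex.betaIntegral (1 + a) (1 - a) := by
    unfold Complex.betaIntegral
    rw [intervalIntegral.integral_of_le zero_le_one, integral_Ioc_eq_integral_Ioo]
    refine setIntegral_congr_fun measurableSet_Ioo fun x hx => ?_
    have hx0 : (x:ℂ) ≠ 0 := by exact_mod_cast hx.1.ne'
    have hx1 : (1 - x:ℂ) ≠ 0 := by
      have : (1 - x) ≠ 0 := by linarith [hx.2]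
      exact_mod_cast this
    rw [Complex.cpow_def_of_ne_zero hx0, Complex.cpow_def_of_ne_zero hx1, ← Complex.exp_add]
    congr 1
    rw [← Complex.ofReal_log hx.1.le, show (1 - x:ℂ) = ((1 - x : ℝ):ℂ) by push_cast; ring, ← Complex.ofReal_log (by linarith [hx.2]), ha]
    unfold YY
    push_cast
    have : (Real.pi:ℂ) ≠ 0 := by exact_mod_cast hpi.ne'
    field_simp
    ring
  have ha_re : a.re = 0 := by rw [ha]; simp only [mul_re, ofReal_re, ofReal_im, I_re, I_im]; ring
  have h2 := Complex.Gamma_mul_Gamma_eq_betaIntegral (s := 1 + a) (t := 1 - a) (by rw [add_re, ha_re]; simp) (by rw [sub_re, ha_re]; simp)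
  rw [show (1 + a) + (1 - a) = ((1:ℕ):ℂ) + 1 by push_cast; ring, Complex.Gamma_nat_eq_factorial] at h2
  simp only [Nat.factorial_one, Nat.cast_one, one_mul] at h2
  have ha0 : a ≠ 0 := by
    rw [ha]; refine mul_ne_zero ?_ I_ne_zero
    have : l / (2*Real.pi) ≠ 0 := div_ne_zero hl.ne (by positivity)
    exact_mod_cast this
  rw [e1, ← h2, add_comm, Complex.Gamma_add_one _ ha0, mul_assoc, Complex.Gamma_mul_Gamma_one_sub, ← sinh_base l hl]
  have e3 : Complex.sin (Real.pi * a) = ((Real.sinh (l/2) : ℝ):ℂ) * I := by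
    rw [ha, ← mul_assoc, Complex.sin_mul_I]
    push_cast
    have : (Real.pi:ℂ) ≠ 0 := by exact_mod_cast hpi.ne'
    congr 2
    field_simp
  rw [e3, ha]
  have : Real.sinh (l/2) ≠ 0 := by
    rw [ne_eq, Real.sinh_eq_zero]; linarith
  have : ((Real.sinh (l/2) : ℝ):ℂ) ≠ 0 := by exact_mod_cast this
  have : (Real.pi:ℂ) ≠ 0 := by exact_mod_cast hpi.ne'
  push_cast at *
  field_simp

/-- integrability of exponentials of `|Y|` -/
lemma exp_YY_int (b : ℝ) (hb0 : 0 ≤ b) (hb : b < 2 * Real.pi) : IntegrableOn (fun x => Real.exp (b * |YY x|)) (Set.Ioo 0 1) := by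
  have hpi := Real.pi_pos
  set c := b / (2*Real.pi) with hc
  have hc1 : c < 1 := by rw [hc, div_lt_one (by positivity)]; exact hb
  have hc0 : 0 ≤ c := by positivity
  have h1 : IntegrableOn (fun x : ℝ => x ^ (-c)) (Set.Ioo 0 1) := by
    rw [← integrableOn_Ioc_iff_integrableOn_Ioo]
    exact (intervalIntegrable_iff_integrableOn_Ioc_of_le zero_le_one).1 (intervalIntegral.intervalIntegrable_rpow' (by linarith))
  have h2 : IntegrableOn (fun x : ℝ => (1 - x) ^ (-c)) (Set.Ioo 0 1) := by
    have := (intervalIntegral.intervalIntegrable_rpow' (a := 0) (b := 1) (r := -c) (by linarith)).comp_sub_left 1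
    simp only [sub_zero, sub_self] at this
    rw [← integrableOn_Ioc_iff_integrableOn_Ioo]
    exact (intervalIntegrable_iff_integrableOn_Ioc_of_le zero_le_one).1 this.symm
  refine Integrable.mono' (h1.add h2) ?_ ?_
  · exact (Real.measurable_exp.comp (measurable_const.mul (YY_meas.abs))).aestronglyMeasurable
  · refine (ae_restrict_iff' measurableSet_Ioo).2 (Eventually.of_forall fun x hx => ?_)
    have hx1 : 0 < 1 - x := by linarith [hx.2]
    rw [Real.norm_of_nonneg (Real.exp_pos _).le]
    simp only [Pi.add_apply]
    rw [Real.rpow_def_of_pos hx.1, Real.rpow_def_of_pos hx1]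
    have l1 : Real.log x < 0 := Real.log_neg hx.1 hx.2
    have l2 : Real.log (1-x) < 0 := Real.log_neg hx1 (by linarith [hx.1])
    have e : b * |YY x| = c * |Real.log x - Real.log (1-x)| := by
      unfold YY; rw [abs_div, abs_of_pos (by positivity : 0 < 2*Real.pi), hc]; ring
    rw [e]
    rcases abs_cases (Real.log x - Real.log (1-x)) with ⟨h, -⟩ | ⟨h, -⟩
    · rw [h]
      have : Real.exp (c * (Real.log x - Real.log (1-x))) ≤ Real.exp (Real.log (1-x) * -c) := by
        rw [Real.exp_le_exp]; nlinarith
      have := Real.exp_pos (Real.log x * -c)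
      linarith
    · rw [h]
      have : Real.exp (c * -(Real.log x - Real.log (1-x))) ≤ Real.exp (Real.log x * -c) := by
        rw [Real.exp_le_exp]; nlinarith
      have := Real.exp_pos (Real.log (1-x) * -c)
      linarith

noncomputable def W (m : ℕ) (x : ℝ) : ℂ := (m:ℂ) + YY x * I

lemma W_meas (m : ℕ) : Measurable (W m) := by
  unfold W
  exact measurable_const.add ((Complex.measurable_ofReal.comp YY_meas).mul_const _)
lemma W_re (m : ℕ) (x : ℝ) : (W m x).re = m := by simp [W]

lemma W_pow_int (m j : ℕ) : IntegrableOn (fun x => ‖W m x‖^j) (Set.Ioo 0 1) := by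
  have h := (exp_YY_int 1 zero_le_one (by linarith [Real.pi_gt_three])).const_mul (j.factorial * Real.exp m)
  refine Integrable.mono' h ((W_meas m).norm.pow_const j).aestronglyMeasurable (Eventually.of_forall fun x => ?_)
  have h1 : ‖W m x‖ ≤ m + |YY x| := by
    unfold W
    refine (norm_add_le _ _).trans ?_
    simp
  have h2 : (m + |YY x|)^j ≤ j.factorial * Real.exp (m + |YY x|) := by
    have := Real.pow_div_factorial_le_exp (m + |YY x|) (by positivity) j
    rw [div_le_iff₀ (by positivity)] at this
    linarith
  rw [Real.norm_of_nonneg (by positivity), one_mul, mul_assoc, ← Real.exp_add]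
  exact (pow_le_pow_left₀ (norm_nonneg _) h1 j).trans h2

noncomputable def Phi (m j : ℕ) (l : ℝ) : ℂ := ∫ x in Set.Ioo (0:ℝ) 1, (W m x)^j * cexp (W m x * l)

lemma norm_exp_W (m : ℕ) (x l : ℝ) (hl : l ≤ 0) : ‖cexp (W m x * l)‖ ≤ 1 := by
  rw [Complex.norm_exp]
  simp only [mul_re, ofReal_re, ofReal_im, mul_zero, sub_zero, W_re]
  rw [Real.exp_le_one_iff]
  exact mul_nonpos_of_nonneg_of_nonpos (by positivity) hl

lemma Phi_meas (m j : ℕ) (l : ℝ) : Measurable (fun x => (W m x)^j * cexp (W m x * l)) :=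
  ((W_meas m).pow_const j).mul (Complex.measurable_exp.comp ((W_meas m).mul_const _))

lemma Phi_int (m j : ℕ) (l : ℝ) (hl : l ≤ 0) : IntegrableOn (fun x => (W m x)^j * cexp (W m x * l)) (Set.Ioo 0 1) := by
  refine Integrable.mono' (W_pow_int m j) (Phi_meas m j l).aestronglyMeasurable (Eventually.of_forall fun x => ?_)
  rw [norm_mul, norm_pow]
  exact mul_le_of_le_one_right (by positivity) (norm_exp_W m x l hl)

lemma Phi_deriv (m j : ℕ) (l : ℝ) (hl : l < 0) : HasDerivAt (Phi m j) (Phi m (j+1) l) l := by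
  unfold Phi
  refine (hasDerivAt_integral_of_dominated_loc_of_deriv_le (μ := volume.restrict (Set.Ioo (0:ℝ) 1))
    (F := fun (l:ℝ) x => (W m x)^j * cexp (W m x * l)) (F' := fun (l:ℝ) x => (W m x)^(j+1) * cexp (W m x * l))
    (bound := fun x => ‖W m x‖^(j+1)) (s := Set.Iio 0) (Iio_mem_nhds hl) ?_ (Phi_int m j l hl.le) ?_ ?_ (W_pow_int m (j+1)) ?_).2
  · exact Eventually.of_forall fun l => (Phi_meas m j l).aestronglyMeasurable
  · exact (Phi_meas m (j+1) l).aestronglyMeasurable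
  · refine Eventually.of_forall fun x l hl => ?_
    rw [norm_mul, norm_pow]
    exact mul_le_of_le_one_right (by positivity) (norm_exp_W m x l (le_of_lt hl))
  · refine Eventually.of_forall fun x l _ => ?_
    have h1 : HasDerivAt (fun l : ℝ => W m x * (l:ℂ)) (W m x) l := by
      simpa using (Complex.ofRealCLM.hasDerivAt (x := l)).const_mul (W m x)
    refine (h1.cexp.const_mul ((W m x)^j)).congr_deriv ?_
    ring

noncomputable def cc (m t : ℕ) : ℝ := (t:ℝ) + m + 1/2
lemma cc_pos (m t : ℕ) : 0 < cc m t := by unfold cc; positivity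

noncomputable def SS (m j : ℕ) (l : ℝ) : ℝ := ∑' t, (cc m t)^j * Real.exp (cc m t * l)

lemma SS_summable (m j : ℕ) (l : ℝ) (hl : l < 0) : Summable (fun t => (cc m t)^j * Real.exp (cc m t * l)) := by
  have h1 : ‖Real.exp l‖ < 1 := by rw [Real.norm_of_nonneg (Real.exp_pos _).le, Real.exp_lt_one_iff]; exact hl
  have h2 := summable_pow_mul_geometric_of_norm_lt_one j h1
  have h3 := ((summable_nat_add_iff (m+1)).2 h2).mul_left (Real.exp (-l))
  refine Summable.of_nonneg_of_le (fun t => by have := cc_pos m t; positivity) (fun t => ?_) h3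
  rw [mul_left_comm, ← Real.exp_nat_mul, ← Real.exp_add]
  have h4 : cc m t ≤ ((t + (m+1) : ℕ):ℝ) := by unfold cc; push_cast; linarith
  have h5 : cc m t * l ≤ -l + ((t + (m+1) : ℕ):ℝ) * l := by unfold cc; push_cast; nlinarith
  have := (cc_pos m t).le
  gcongr

lemma SS_deriv (m j : ℕ) (l : ℝ) (hl : l < 0) : HasDerivAt (SS m j) (SS m (j+1) l) l := by
  unfold SS
  refine hasDerivAt_tsum_of_isPreconnected (u := fun t => (cc m t)^(j+1) * Real.exp (cc m t * (l/2)))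
    (SS_summable m (j+1) (l/2) (by linarith)) (t := Set.Iio (l/2)) isOpen_Iio isPreconnected_Iio
    (g := fun t l => (cc m t)^j * Real.exp (cc m t * l))
    (g' := fun t l => (cc m t)^(j+1) * Real.exp (cc m t * l)) ?_ ?_ (y₀ := l) (by simp; linarith) (SS_summable m j l hl)
    (by simp; linarith)
  · intro t y _
    have h1 : HasDerivAt (fun l : ℝ => cc m t * l) (cc m t) y := by
      simpa using (hasDerivAt_id y).const_mul (cc m t)
    refine (h1.exp.const_mul ((cc m t)^j)).congr_deriv ?_
    ring
  · intro t y hy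
    have := cc_pos m t
    rw [Real.norm_of_nonneg (by positivity)]
    have : y ≤ l/2 := le_of_lt hy
    gcongr

lemma Phi_eq (m j : ℕ) : ∀ l < 0, Phi m j l = ((-(l * SS m j l + j * SS m (j-1) l) : ℝ) : ℂ) := by
  induction j with
  | zero =>
    intro l hl
    have h1 : Phi m 0 l = cexp (m * l) * ∫ x in Set.Ioo (0:ℝ) 1, cexp ((YY x : ℂ) * I * l) := by
      unfold Phi
      rw [← integral_const_mul]
      congr 1; funext x
      rw [pow_zero, one_mul, W, add_mul, Complex.exp_add]
    have h2 : SS m 0 l = Real.exp (m * l) * (Real.exp (l/2) / (1 - Real.exp l)) := by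
      unfold SS
      have : ∀ t : ℕ, (cc m t)^0 * Real.exp (cc m t * l) = Real.exp (m*l) * Real.exp (l/2) * (Real.exp l)^t := by
        intro t
        rw [pow_zero, one_mul, ← Real.exp_nat_mul, ← Real.exp_add, ← Real.exp_add]
        congr 1; unfold cc; ring
      simp only [this]
      rw [tsum_mul_left, tsum_geometric_of_lt_one (Real.exp_pos _).le (by rwa [Real.exp_lt_one_iff])]
      ring
    rw [h1, beta_base l hl, h2]
    push_cast
    ring
  | succ j ih =>
    intro l hl
    have h1 := Phi_deriv m j l hl
    have h2 : HasDerivAt (fun l : ℝ => ((-(l * SS m j l + j * SS m (j-1) l) : ℝ) : ℂ))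
        ((-(l * SS m (j+1) l + (j+1) * SS m j l) : ℝ) : ℂ) l := by
      refine HasDerivAt.ofReal_comp ?_
      have a1 := (hasDerivAt_id l).mul (SS_deriv m j l hl)
      have a2 : HasDerivAt (fun l => (j:ℝ) * SS m (j-1) l) (j * SS m j l) l := by
        cases j with
        | zero => simpa using hasDerivAt_const l (0:ℝ)
        | succ i => exact (SS_deriv m i l hl).const_mul _
      refine ((a1.add a2).neg).congr_deriv ?_
      simp only [id]; ring
    have h3 : Phi m j =ᶠ[𝓝 l] (fun l : ℝ => ((-(l * SS m j l + j * SS m (j-1) l) : ℝ) : ℂ)) := by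
      filter_upwards [Iio_mem_nhds hl] with y hy
      exact ih y hy
    have := h1.unique (h2.congr_of_eventuallyEq h3)
    rw [this]
    push_cast; simp

open Polynomial in
lemma Phi_poly (m : ℕ) (P : ℝ[X]) (l : ℝ) (hl : l < 0) :
    ∫ x in Set.Ioo (0:ℝ) 1, (P.aeval (W m x)) * cexp (W m x * l) =
    ((-(l * ∑' t, P.eval (cc m t) * Real.exp (cc m t * l) + ∑' t, P.derivative.eval (cc m t) * Real.exp (cc m t * l)) : ℝ) : ℂ) := by
  have e1 : ∑' t, P.eval (cc m t) * Real.exp (cc m t * l) = ∑ j ∈ Finset.range (P.natDegree+1), P.coeff j * SS m j l := by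
    simp only [eval_eq_sum_range, Finset.sum_mul, mul_assoc]
    rw [Summable.tsum_finsetSum fun j _ => (SS_summable m j l hl).mul_left _]
    simp only [tsum_mul_left]; rfl
  have e2 : ∑' t, P.derivative.eval (cc m t) * Real.exp (cc m t * l) = ∑ j ∈ Finset.range (P.natDegree+1), P.coeff j * (j * SS m (j-1) l) := by
    have hd : ∀ x, P.derivative.eval x = ∑ j ∈ Finset.range (P.natDegree+1), P.coeff j * (j * x^(j-1)) := by
      intro x
      rw [derivative_eval, sum_over_range P (by simp)]
      simp only [mul_assoc]
    simp only [hd, Finset.sum_mul, mul_assoc]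
    rw [Summable.tsum_finsetSum fun j _ => ((SS_summable m (j-1) l hl).mul_left _).mul_left _]
    simp only [tsum_mul_left]; rfl
  have e3 : ∀ x, (P.aeval (W m x)) * cexp (W m x * l) = ∑ j ∈ Finset.range (P.natDegree+1), (P.coeff j : ℂ) * ((W m x)^j * cexp (W m x * l)) := by
    intro x
    rw [aeval_eq_sum_range, Finset.sum_mul]
    refine Finset.sum_congr rfl fun j _ => ?_
    rw [Complex.real_smul]; ring
  simp only [e3]
  rw [integral_finsetSum _ fun j _ => (Phi_int m j l hl.le).const_mul _, e1, e2]
  simp only [integral_const_mul]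
  have : ∀ j, ∫ x in Set.Ioo (0:ℝ) 1, (W m x)^j * cexp (W m x * l) = Phi m j l := fun j => rfl
  simp only [this, Phi_eq m _ l hl]
  push_cast
  rw [Finset.mul_sum, ← Finset.sum_add_distrib, ← Finset.sum_neg_distrib]
  refine Finset.sum_congr rfl fun j _ => ?_
  ring

end Pf
end

section
open MeasureTheory Filter Topology Complex

namespace Pf

noncomputable def GA (A y : ℝ) : ℝ := A * Real.log (A^2+y^2) / 2 - A + y * Real.arctan (A/y)

lemma GA_deriv_A (A y : ℝ) (hy : 0 < y) : HasDerivAt (fun A => GA A y) (Real.log (A^2+y^2) / 2) A := by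
  unfold GA
  have hp : A^2+y^2 ≠ 0 := by positivity
  have h1 : HasDerivAt (fun A : ℝ => A^2+y^2) (2*A) A := by
    simpa using ((hasDerivAt_id A).pow 2).add_const (y^2)
  have h2 := ((((hasDerivAt_id A).mul (h1.log hp)).div_const 2).sub (hasDerivAt_id A)).add
    ((((hasDerivAt_id A).div_const y).arctan).const_mul y)
  refine h2.congr_deriv ?_
  simp only [id]
  have : y^2 + A^2 ≠ 0 := by positivity
  have : 1 + (A/y)^2 = (y^2+A^2)/y^2 := by field_simp
  rw [this]
  field_simp
  ring

lemma GA_deriv_y (A y : ℝ) (hy : 0 < y) : HasDerivAt (fun y => GA A y) (Real.arctan (A/y)) y := by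
  unfold GA
  have hp : A^2+y^2 ≠ 0 := by positivity
  have h1 : HasDerivAt (fun y : ℝ => A^2+y^2) (2*y) y := by
    simpa using ((hasDerivAt_id y).pow 2).const_add (A^2)
  have h3 : HasDerivAt (fun y : ℝ => A / y) (-A/y^2) y := by
    refine ((hasDerivAt_const y A).div (hasDerivAt_id y) hy.ne').congr_deriv ?_
    simp
  have h2 := ((((h1.log hp).const_mul A).div_const 2).sub_const A).add ((hasDerivAt_id y).mul h3.arctan)
  refine h2.congr_deriv ?_
  simp only [id]
  have : y^2 + A^2 ≠ 0 := by positivity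
  have : 1 + (A/y)^2 = (y^2+A^2)/y^2 := by field_simp
  rw [this]
  field_simp
  ring

lemma GA_mvt (A B y : ℝ) (hA : 0 ≤ A) (hAB : A < B) (hy : 0 < y) :
    (B - A) * (Real.log (A^2+y^2) / 2) ≤ GA B y - GA A y := by
  obtain ⟨c, hc, h⟩ := exists_hasDerivAt_eq_slope (fun A => GA A y) (fun A => Real.log (A^2+y^2) / 2) hAB
    (fun x _ => (GA_deriv_A x y hy).continuousAt.continuousWithinAt) (fun x _ => GA_deriv_A x y hy)
  have h1 : Real.log (A^2+y^2) ≤ Real.log (c^2+y^2) := by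
    have := hc.1
    gcongr
  rw [eq_div_iff (by linarith)] at h
  rw [← h]
  nlinarith

lemma GA_mono (A B y : ℝ) (hA : 0 ≤ A) (hAB : A ≤ B) (hy : 1 ≤ y) : GA A y ≤ GA B y := by
  rcases hAB.eq_or_lt with rfl | h
  · rfl
  · have := GA_mvt A B y hA h (by linarith)
    have h2 : 0 ≤ Real.log (A^2+y^2) := Real.log_nonneg (by nlinarith)
    have := mul_nonneg (sub_nonneg.2 hAB) (by positivity : 0 ≤ Real.log (A^2+y^2)/2)
    linarith

lemma GA_tangent (A y y1 : ℝ) (hA : 0 ≤ A) (hy : 0 < y) (hy1 : 0 < y1) :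
    GA A y ≤ GA A y1 + (y - y1) * Real.arctan (A / y1) := by
  rcases lt_trichotomy y y1 with h | rfl | h
  · obtain ⟨c, hc, e⟩ := exists_hasDerivAt_eq_slope (fun y => GA A y) (fun y => Real.arctan (A/y)) h
      (fun x hx => (GA_deriv_y A x (by linarith [hx.1])).continuousAt.continuousWithinAt) (fun x hx => GA_deriv_y A x (by linarith [hx.1]))
    have h1 : Real.arctan (A/y1) ≤ Real.arctan (A/c) := by
      apply Real.arctan_mono
      have := hc.1
      have := hc.2.le
      have : 0 < c := by linarith
      gcongr
    rw [eq_div_iff (by linarith)] at e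
    nlinarith
  · simp
  · obtain ⟨c, hc, e⟩ := exists_hasDerivAt_eq_slope (fun y => GA A y) (fun y => Real.arctan (A/y)) h
      (fun x hx => (GA_deriv_y A x (by linarith [hx.1])).continuousAt.continuousWithinAt) (fun x hx => GA_deriv_y A x (by linarith [hx.1]))
    have h1 : Real.arctan (A/c) ≤ Real.arctan (A/y1) := by
      apply Real.arctan_mono
      have := hc.1.le
      gcongr
    rw [eq_div_iff (by linarith)] at e
    nlinarith

noncomputable def QK (K : ℕ) (y : ℝ) : ℝ := ∏ j ∈ Finset.range K, Real.sqrt (((j:ℝ)+1/2)^2+y^2)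

lemma QK_le (K : ℕ) (y : ℝ) (hy : 1 ≤ y) : QK K y ≤ Real.exp (GA (K+1/2) y + 1) := by
  induction K with
  | zero =>
    simp only [QK, Finset.range_zero, Finset.prod_empty, Nat.cast_zero, zero_add]
    rw [Real.one_le_exp_iff]
    unfold GA
    have h1 : 0 ≤ Real.log ((1/2:ℝ)^2+y^2) := Real.log_nonneg (by nlinarith)
    have h2 : 0 ≤ Real.arctan (1/2/y) := by
      rw [← Real.arctan_zero]; exact Real.arctan_mono (by positivity)
    have : 0 ≤ y * Real.arctan (1/2/y) := by positivity
    linarith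
  | succ K ih =>
    unfold QK at *
    rw [Finset.prod_range_succ]
    have h1 := GA_mvt (K+1/2) (K+1+1/2) y (by positivity) (by linarith) (by linarith)
    have h2 : Real.sqrt (((K:ℝ)+1/2)^2+y^2) ≤ Real.exp (GA (K+1+1/2) y - GA (K+1/2) y) := by
      rw [Real.sqrt_eq_rpow, Real.rpow_def_of_pos (by positivity), Real.exp_le_exp]
      linarith
    calc _ ≤ Real.exp (GA (K+1/2) y + 1) * Real.exp (GA (K+1+1/2) y - GA (K+1/2) y) := by gcongr
      _ = _ := by rw [← Real.exp_add]; congr 1; push_cast; ring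

lemma QK_mono (K : ℕ) (y y' : ℝ) (h : |y| ≤ y') : QK K y ≤ QK K y' := by
  unfold QK
  refine Finset.prod_le_prod (fun _ _ => Real.sqrt_nonneg _) fun j _ => ?_
  apply Real.sqrt_le_sqrt
  have : y^2 ≤ y'^2 := sq_le_sq' (by linarith [neg_abs_le y]) ((le_abs_self y).trans h)
  linarith

/-- one factor bound -/
lemma QK_bound (K : ℕ) (N a η Y : ℝ) (ha : 0 < a) (hη : 1 ≤ η) (hN : 1 ≤ N) (hK : (K:ℝ)+1/2 ≤ a * N) :
    QK K Y ≤ Real.exp (N * (a * Real.log (a^2+η^2) / 2 - a) + a * (N * Real.log N) + (|Y|+1) * Real.arctan (a/η) + 1) := by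
  have h0 : |Y| ≤ |Y| + 1 := by linarith
  have h1 : 1 ≤ |Y| + 1 := by linarith [abs_nonneg Y]
  have hηN : 0 < η * N := by positivity
  refine (QK_mono K Y _ h0).trans ((QK_le K _ h1).trans ?_)
  rw [Real.exp_le_exp]
  have h2 := GA_mono _ _ _ (by positivity) hK h1
  have h3 := GA_tangent (a*N) (|Y|+1) (η*N) (by positivity) (by linarith) hηN
  have e1 : a * N / (η * N) = a / η := by field_simp
  have e2 : GA (a*N) (η*N) = N * (a * Real.log (a^2+η^2) / 2 - a) + a * (N * Real.log N) + η * N * Real.arctan (a/η) := by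
    unfold GA
    rw [e1, show (a*N)^2 + (η*N)^2 = (a^2+η^2) * N^2 by ring, Real.log_mul (by positivity) (by positivity), Real.log_pow]
    push_cast; ring
  rw [e1, e2] at h3
  linarith

lemma Bp_norm (h m : ℕ) (hm : m ≤ h) (y : ℝ) :
    ‖Polynomial.aeval (((m:ℂ) + y * I)^2) (Bp h)‖ = QK (m+h) y * QK (h-m) y := by
  have n1 : ∀ a : ℝ, ‖(a:ℂ) + y * I‖ = Real.sqrt (a^2+y^2) := by
    intro a; rw [Complex.norm_add_mul_I]
  have e1 : ‖Polynomial.aeval (((m:ℂ) + y * I)^2) (Bp h)‖ =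
      (∏ i ∈ Finset.range h, Real.sqrt (((m + i:ℕ) + 1/2:ℝ)^2+y^2)) * ∏ i ∈ Finset.range h, Real.sqrt (((m:ℝ) - i - 1/2)^2+y^2) := by
    unfold Bp
    rw [map_prod, norm_prod, ← Finset.prod_mul_distrib]
    refine Finset.prod_congr rfl fun i _ => ?_
    rw [← n1, ← n1, ← norm_mul]
    congr 1
    simp
    ring
  obtain ⟨d, rfl⟩ := Nat.exists_eq_add_of_le hm
  rw [e1, Finset.prod_range_add (fun i : ℕ => Real.sqrt (((m:ℝ) - i - 1/2)^2+y^2)) m d, Nat.add_sub_cancel_left]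
  unfold QK
  rw [Finset.prod_range_add _ m (m+d), mul_comm (∏ x ∈ Finset.range m, _) (∏ x ∈ Finset.range (m+d), _), ← mul_assoc]
  have r := Finset.prod_range_reflect (fun j : ℕ => Real.sqrt (((j:ℝ)+1/2)^2+y^2)) m
  rw [← r]
  refine congrArg₂ _ (congrArg₂ _ ?_ ?_) ?_
  · rfl
  · refine Finset.prod_congr rfl fun i hi => ?_
    have := Finset.mem_range.1 hi
    have : ((m - 1 - i : ℕ):ℝ) = m - 1 - i := by
      rw [Nat.cast_sub (by omega), Nat.cast_sub (by omega)]; simp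
    rw [this]
    congr 2; ring
  · refine Finset.prod_congr rfl fun i hi => ?_
    congr 1; push_cast; ring

lemma fact_ge (m : ℕ) (hm : 0 < m) : Real.exp (m * Real.log m - m) ≤ m.factorial := by
  have h := Real.pow_div_factorial_le_exp (m:ℝ) (by positivity) m
  rw [div_le_iff₀ (by positivity)] at h
  rw [Real.exp_sub, mul_comm (m:ℝ), ← Real.rpow_def_of_pos (by positivity), Real.rpow_natCast, div_le_iff₀ (Real.exp_pos _)]
  linarith

lemma fact_scale (b k : ℕ) (hb : 0 < b) (hk : 0 < k) (n : ℝ) (hn : n = 100 * k) :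
    Real.exp (n * (b * Real.log b) + b * (n * Real.log n) - b * n) ≤ ((100*b*k).factorial : ℝ) := by
  refine le_trans (le_of_eq ?_) (fact_ge (100*b*k) (by positivity))
  have : ((100*b*k : ℕ):ℝ) = b * n := by rw [hn]; push_cast; ring
  rw [this, Real.log_mul (by positivity) (by rw [hn]; positivity)]
  congr 1; ring

noncomputable def SJ (η : ℝ) : ℝ := (3.83 * Real.log (3.83^2+η^2) + 3.17 * Real.log (3.17^2+η^2) + 2.83 * Real.log (2.83^2+η^2)
  + 2.17 * Real.log (2.17^2+η^2) + 1.83 * Real.log (1.83^2+η^2) + 1.17 * Real.log (1.17^2+η^2)) / 2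
noncomputable def TJ : ℝ := 7 * Real.log 7 + 5 * Real.log 5 + 3 * Real.log 3
noncomputable def thJ (η : ℝ) : ℝ := Real.arctan (3.83/η) + Real.arctan (3.17/η) + Real.arctan (2.83/η)
  + Real.arctan (2.17/η) + Real.arctan (1.83/η) + Real.arctan (1.17/η)

lemma D0_ge (k : ℕ) (hk : 0 < k) (n : ℝ) (hn : n = 100 * k) :
    Real.exp (n * TJ + 15 * (n * Real.log n) - 15 * n) ≤ D0 (350*k) (250*k) (150*k) := by
  have h1 := fact_scale 7 k (by norm_num) hk n hn
  have h2 := fact_scale 5 k (by norm_num) hk n hn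
  have h3 := fact_scale 3 k (by norm_num) hk n hn
  unfold D0
  rw [show 2*(350*k) = 100*7*k by ring, show 2*(250*k) = 100*5*k by ring, show 2*(150*k) = 100*3*k by ring]
  refine le_trans (le_of_eq ?_) (mul_le_mul (mul_le_mul h1 h2 (by positivity) (by positivity)) h3 (by positivity) (by positivity))
  rw [← Real.exp_add, ← Real.exp_add]
  congr 1; unfold TJ; push_cast; ring

lemma RR_norm (k : ℕ) (hk : 0 < k) (n : ℝ) (hn : n = 100 * k) (η : ℝ) (hη : 1 ≤ η) (y : ℝ) :
    ‖Polynomial.aeval (((33*k:ℕ):ℂ) + y * I) (RR (350*k) (250*k) (150*k))‖ ≤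
    Real.exp (((n+1) * (SJ η - 15) + 15 * ((n+1) * Real.log (n+1)) + (|y|+1) * thJ η + 6) - (n * TJ + 15 * (n * Real.log n) - 15 * n)) := by
  have hk1 : (1:ℝ) ≤ k := by exact_mod_cast hk
  have hN : 1 ≤ n + 1 := by rw [hn]; linarith
  unfold RR qq
  simp only [map_mul, Polynomial.aeval_C, Polynomial.aeval_comp, map_pow, Polynomial.aeval_X, norm_mul]
  rw [Bp_norm _ _ (by omega), Bp_norm _ _ (by omega), Bp_norm _ _ (by omega)]
  rw [show 33*k+350*k = 383*k by ring, show 350*k-33*k = 317*k by omega, show 33*k+250*k = 283*k by ring,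
    show 250*k-33*k = 217*k by omega, show 33*k+150*k=183*k by ring, show 150*k-33*k=117*k by omega]
  have hD := D0_ge k hk n hn
  have b1 := QK_bound (383*k) (n+1) 3.83 η y (by norm_num) hη hN (by rw [hn]; push_cast; linarith)
  have b2 := QK_bound (317*k) (n+1) 3.17 η y (by norm_num) hη hN (by rw [hn]; push_cast; linarith)
  have b3 := QK_bound (283*k) (n+1) 2.83 η y (by norm_num) hη hN (by rw [hn]; push_cast; linarith)
  have b4 := QK_bound (217*k) (n+1) 2.17 η y (by norm_num) hη hN (by rw [hn]; push_cast; linarith)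
  have b5 := QK_bound (183*k) (n+1) 1.83 η y (by norm_num) hη hN (by rw [hn]; push_cast; linarith)
  have b6 := QK_bound (117*k) (n+1) 1.17 η y (by norm_num) hη hN (by rw [hn]; push_cast; linarith)
  have q0 : ∀ K, 0 ≤ QK K y := fun K => Finset.prod_nonneg fun _ _ => Real.sqrt_nonneg _
  have hDi : ‖(algebraMap ℝ ℂ) (D0 (350*k) (250*k) (150*k))⁻¹‖ ≤ Real.exp (-(n * TJ + 15 * (n * Real.log n) - 15 * n)) := by
    have := D0_pos (350*k) (250*k) (150*k)
    rw [Real.exp_neg]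
    simp only [Complex.coe_algebraMap, Complex.norm_real, norm_inv, Real.norm_of_nonneg this.le]
    exact inv_anti₀ (Real.exp_pos _) hD
  have hb : QK (383*k) y * QK (317*k) y * (QK (283*k) y * QK (217*k) y) * (QK (183*k) y * QK (117*k) y) ≤ _ :=
    mul_le_mul (mul_le_mul (mul_le_mul b1 b2 (q0 _) (Real.exp_pos _).le) (mul_le_mul b3 b4 (q0 _) (Real.exp_pos _).le) (mul_nonneg (q0 _) (q0 _)) (by positivity))
      (mul_le_mul b5 b6 (q0 _) (Real.exp_pos _).le) (mul_nonneg (q0 _) (q0 _)) (by positivity)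
  refine (mul_le_mul hDi hb (mul_nonneg (mul_nonneg (mul_nonneg (q0 _) (q0 _)) (mul_nonneg (q0 _) (q0 _))) (mul_nonneg (q0 _) (q0 _))) (Real.exp_pos _).le).trans (le_of_eq ?_)
  simp only [← Real.exp_add]
  congr 1
  unfold SJ thJ
  ring

noncomputable def JJ (k : ℕ) (l : ℝ) : ℂ := ∫ x in Set.Ioo (0:ℝ) 1, (Polynomial.aeval (W (33*k) x) (RR (350*k) (250*k) (150*k))) * cexp (W (33*k) x * l)

lemma JJ_bound (η : ℝ) (hη : 1 ≤ η) (hth : thJ η < 2 * Real.pi) (l : ℝ) : ∃ C : ℝ, ∀ k : ℕ, 0 < k →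
    ‖JJ k l‖ ≤ C * Real.exp ((100*k:ℝ) * (SJ η - TJ + 0.33 * l) + 15 * ((100*k+1:ℝ) * Real.log (100*k+1) - 100*k * Real.log (100*k))) := by
  have hth0 : 0 ≤ thJ η := by
    have : ∀ a : ℝ, 0 ≤ a → 0 ≤ Real.arctan (a/η) := fun a ha => by
      rw [← Real.arctan_zero]; exact Real.arctan_mono (by positivity)
    unfold thJ
    have h1 := this 3.83 (by norm_num)
    have h2 := this 3.17 (by norm_num)
    have h3 := this 2.83 (by norm_num)
    have h4 := this 2.17 (by norm_num)
    have h5 := this 1.83 (by norm_num)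
    have h6 := this 1.17 (by norm_num)
    linarith
  refine ⟨Real.exp (SJ η - 15 + thJ η + 6) * ∫ x in Set.Ioo (0:ℝ) 1, Real.exp (thJ η * |YY x|), fun k hk => ?_⟩
  have hi := exp_YY_int (thJ η) hth0 hth
  set E := Real.exp ((100*k:ℝ) * (SJ η - TJ + 0.33 * l) + 15 * ((100*k+1:ℝ) * Real.log (100*k+1) - 100*k * Real.log (100*k))) with hE
  unfold JJ
  have : ‖∫ x in Set.Ioo (0:ℝ) 1, (Polynomial.aeval (W (33*k) x) (RR (350*k) (250*k) (150*k))) * cexp (W (33*k) x * l)‖ ≤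
      ∫ x in Set.Ioo (0:ℝ) 1, (Real.exp (SJ η - 15 + thJ η + 6) * E) * Real.exp (thJ η * |YY x|) := by
    refine norm_integral_le_of_norm_le (hi.const_mul _) (Eventually.of_forall fun x => ?_)
    have h1 := RR_norm k hk (100*k) rfl η hη (YY x)
    rw [norm_mul, Complex.norm_exp]
    have h2 : (W (33*k) x * l).re = 33 * k * l := by
      simp only [mul_re, ofReal_re, ofReal_im, mul_zero, sub_zero, W_re]; push_cast; ring
    rw [h2]
    refine (mul_le_mul_of_nonneg_right h1 (Real.exp_pos _).le).trans (le_of_eq ?_)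
    rw [hE]
    simp only [← Real.exp_add]
    congr 1
    ring
  refine this.trans (le_of_eq ?_)
  rw [integral_const_mul]
  ring

end Pf
end

section
open MeasureTheory Filter Topology

namespace Pf

lemma tsum_shift (F : ℕ → ℝ) (m : ℕ) (hF : Summable F) (h0 : ∀ t < m, F t = 0) : ∑' t, F (t+m) = ∑' t, F t := by
  rw [← hF.sum_add_tsum_nat_add m, Finset.sum_eq_zero fun t ht => h0 t (Finset.mem_range.1 ht), zero_add]

lemma JJ_eq (k : ℕ) (z : ℝ) (hz : 0 < z) (hz1 : z < 1)
    (s1 : Summable fun t => (ff (350*k) (250*k) (150*k) t : ℝ) * z^t)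
    (s2 : Summable fun t => gg (350*k) (250*k) (150*k) t * z^t) :
    JJ k (Real.log z) = ((-(Real.sqrt z * (Real.log z * ∑' t, (ff (350*k) (250*k) (150*k) t : ℝ) * z^t +
      ∑' t, gg (350*k) (250*k) (150*k) t * z^t)) : ℝ) : ℂ) := by
  unfold JJ
  rw [Phi_poly _ _ _ (Real.log_neg hz hz1)]
  congr 1
  have hc : ∀ t : ℕ, cc (33*k) t = ((t + 33*k : ℕ):ℝ) + 1/2 := by intro t; unfold cc; push_cast; ring
  have he : ∀ t : ℕ, Real.exp (cc (33*k) t * Real.log z) = Real.sqrt z * z^(t+33*k) := by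
    intro t
    rw [hc, Real.sqrt_eq_rpow, ← Real.rpow_natCast, ← Real.rpow_add hz, Real.rpow_def_of_pos hz]
    congr 1; ring
  have e1 : ∑' t, (RR (350*k) (250*k) (150*k)).eval (cc (33*k) t) * Real.exp (cc (33*k) t * Real.log z) =
      Real.sqrt z * ∑' t, (ff (350*k) (250*k) (150*k) t : ℝ) * z^t := by
    rw [← tsum_shift _ (33*k) s1, ← tsum_mul_left]
    · refine tsum_congr fun t => ?_
      rw [he, hc, RR_eval]; ring
    · intro t ht
      rw [ff_zero (by omega)]; simp
  have e2 : ∑' t, (RR (350*k) (250*k) (150*k)).derivative.eval (cc (33*k) t) * Real.exp (cc (33*k) t * Real.log z) =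
      Real.sqrt z * ∑' t, gg (350*k) (250*k) (150*k) t * z^t := by
    rw [← tsum_shift _ (33*k) s2, ← tsum_mul_left]
    · refine tsum_congr fun t => ?_
      rw [he, hc, RR_deval]; ring
    · intro t ht
      rw [gg_zero (by omega) (by omega)]; simp
  rw [e1, e2]
  ring

lemma choose_le' (N K : ℕ) (l : ℝ) (hl : 0 < l) : (N.choose K : ℝ) ≤ (1+l)^N * (l^K)⁻¹ := by
  rw [← div_eq_mul_inv, le_div_iff₀ (by positivity)]
  rcases le_or_gt K N with h | h
  · rw [add_comm, add_pow]
    have := Finset.single_le_sum (f := fun m => l^m * 1^(N-m) * (N.choose m : ℝ)) (fun _ _ => by positivity) (Finset.mem_range.2 (by omega : K < N+1))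
    simp only [one_pow, mul_one] at this ⊢
    linarith
  · rw [Nat.choose_eq_zero_of_lt h]; simp; positivity

/-- upper bound for the series -/
lemma U_upper (h1 h2 h3 : ℕ) (z l1 l2 l3 : ℝ) (hz : 0 < z) (p1 : 0 < l1) (p2 : 0 < l2) (p3 : 0 < l3)
    (hlt : (1+l1)*(1+l2)*(1+l3)*z < 1) (s1 : Summable fun t => (ff h1 h2 h3 t : ℝ) * z^t) :
    ∑' t, (ff h1 h2 h3 t : ℝ) * z^t ≤ ((1+l1)^h1 * (l1^(2*h1))⁻¹) * ((1+l2)^h2 * (l2^(2*h2))⁻¹) * ((1+l3)^h3 * (l3^(2*h3))⁻¹) *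
      (1 - (1+l1)*(1+l2)*(1+l3)*z)⁻¹ := by
  have hg := hasSum_geometric_of_lt_one (by positivity : 0 ≤ (1+l1)*(1+l2)*(1+l3)*z) hlt
  have hg2 := hg.mul_left (((1+l1)^h1 * (l1^(2*h1))⁻¹) * ((1+l2)^h2 * (l2^(2*h2))⁻¹) * ((1+l3)^h3 * (l3^(2*h3))⁻¹))
  rw [← hg2.tsum_eq]
  refine s1.tsum_le_tsum (fun t => ?_) hg2.summable
  unfold ff
  push_cast
  have a1 := choose_le' (t+h1) (2*h1) l1 p1
  have a2 := choose_le' (t+h2) (2*h2) l2 p2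
  have a3 := choose_le' (t+h3) (2*h3) l3 p3
  calc _ ≤ ((1+l1)^(t+h1) * (l1^(2*h1))⁻¹) * ((1+l2)^(t+h2) * (l2^(2*h2))⁻¹) * ((1+l3)^(t+h3) * (l3^(2*h3))⁻¹) * z^t := by gcongr
    _ = _ := by simp only [pow_add, mul_pow]; ring

lemma log_fact_le (n : ℕ) (hn : 1 ≤ n) : Real.log (n.factorial) ≤ n * Real.log n - n + 1 + Real.log n := by
  induction n, hn using Nat.le_induction with
  | base => simp
  | succ n hn ih =>
    have hn0 : (0:ℝ) < n := by exact_mod_cast hn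
    rw [Nat.factorial_succ]
    push_cast
    rw [Real.log_mul (by positivity) (by positivity)]
    have h : 1 - (((n:ℝ)+1)/n)⁻¹ ≤ Real.log (((n:ℝ)+1)/n) := Real.one_sub_inv_le_log_of_pos (by positivity)
    rw [Real.log_div (by positivity) hn0.ne', inv_div] at h
    have h2 : 1 ≤ ((n:ℝ)+1) * (Real.log (n+1) - Real.log n) := by
      calc (1:ℝ) = ((n:ℝ)+1) * (1 - n/(n+1)) := by field_simp; ring
        _ ≤ _ := by gcongr
    nlinarith

lemma log_fact_ge (n : ℕ) (hn : 0 < n) : n * Real.log n - n ≤ Real.log (n.factorial) := by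
  rw [Real.le_log_iff_exp_le (by positivity)]
  exact fact_ge n hn

lemma log_choose_ge (N K M k : ℕ) (hK : 0 < K) (hM : 0 < M) (hN : N = K + M) (hk : 0 < k) :
    k * (N * Real.log N - K * Real.log K - M * Real.log M) - 2 - 2 * Real.log (N*k) ≤ Real.log (((N*k).choose (K*k) : ℕ)) := by
  have hle : K*k ≤ N*k := Nat.mul_le_mul_right _ (by omega)
  have hle2 : M*k ≤ N*k := Nat.mul_le_mul_right _ (by omega)
  have hN0 : 0 < N := by omega
  have hsub : N - K = M := by omega
  rw [Nat.cast_choose ℝ hle, ← Nat.sub_mul, hsub, Real.log_div (by positivity) (by positivity),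
    Real.log_mul (Nat.cast_ne_zero.2 (Nat.factorial_ne_zero _)) (Nat.cast_ne_zero.2 (Nat.factorial_ne_zero _))]
  have b1 := log_fact_ge (N*k) (Nat.mul_pos hN0 hk)
  have b2 := log_fact_le (K*k) (Nat.mul_pos hK hk)
  have b3 := log_fact_le (M*k) (Nat.mul_pos hM hk)
  have c2 : Real.log ((K*k:ℕ):ℝ) ≤ Real.log (N*k) := Real.log_le_log (by positivity) (by exact_mod_cast hle)
  have c3 : Real.log ((M*k:ℕ):ℝ) ≤ Real.log (N*k) := Real.log_le_log (by positivity) (by exact_mod_cast hle2)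
  have hNr : (0:ℝ) < N := by exact_mod_cast hN0
  have hKr : (0:ℝ) < K := by exact_mod_cast hK
  have hMr : (0:ℝ) < M := by exact_mod_cast hM
  have hkr : (0:ℝ) < k := by exact_mod_cast hk
  have e : (N:ℝ) = K + M := by rw [hN]; push_cast; ring
  have l1 : Real.log ((N:ℝ)*k) = Real.log N + Real.log k := Real.log_mul hNr.ne' hkr.ne'
  have l2 : Real.log ((K:ℝ)*k) = Real.log K + Real.log k := Real.log_mul hKr.ne' hkr.ne'
  have l3 : Real.log ((M:ℝ)*k) = Real.log M + Real.log k := Real.log_mul hMr.ne' hkr.ne'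
  rw [Nat.cast_mul] at b1 b2 b3 c2 c3
  rw [l3] at b3 c3
  rw [l2] at b2 c2
  rw [l1] at b1 c2 c3 ⊢
  generalize Real.log (N:ℝ) = L1 at *
  rw [e] at *
  nlinarith

noncomputable def LU (z : ℝ) : ℝ := (2772 * Real.log 2772 - 700 * Real.log 700 - 2072 * Real.log 2072) +
  (2672 * Real.log 2672 - 500 * Real.log 500 - 2172 * Real.log 2172) + (2572 * Real.log 2572 - 300 * Real.log 300 - 2272 * Real.log 2272)
  + 2422 * Real.log z

lemma U_lower (k : ℕ) (hk : 0 < k) (z : ℝ) (hz : 0 < z) (s1 : Summable fun t => (ff (350*k) (250*k) (150*k) t : ℝ) * z^t) :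
    k * LU z - 6 - 6 * Real.log (2772*k) ≤ Real.log (∑' t, (ff (350*k) (250*k) (150*k) t : ℝ) * z^t) := by
  have h1 : (ff (350*k) (250*k) (150*k) (2422*k) : ℝ) * z^(2422*k) ≤ ∑' t, (ff (350*k) (250*k) (150*k) t : ℝ) * z^t :=
    s1.le_tsum _ fun t _ => by positivity
  have e : ff (350*k) (250*k) (150*k) (2422*k) = (2772*k).choose (700*k) * (2672*k).choose (500*k) * (2572*k).choose (300*k) := by
    unfold ff; congr 1 <;> [congr 1; skip] <;> congr 1 <;> ring
  have q1 : 0 < (2772*k).choose (700*k) := Nat.choose_pos (by omega)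
  have q2 : 0 < (2672*k).choose (500*k) := Nat.choose_pos (by omega)
  have q3 : 0 < (2572*k).choose (300*k) := Nat.choose_pos (by omega)
  have b1 := log_choose_ge 2772 700 2072 k (by norm_num) (by norm_num) (by norm_num) hk
  have b2 := log_choose_ge 2672 500 2172 k (by norm_num) (by norm_num) (by norm_num) hk
  have b3 := log_choose_ge 2572 300 2272 k (by norm_num) (by norm_num) (by norm_num) hk
  have c2 : Real.log ((2672:ℕ)*k) ≤ Real.log (2772*k) := Real.log_le_log (by positivity) (by norm_num; gcongr; norm_num)
  have c3 : Real.log ((2572:ℕ)*k) ≤ Real.log (2772*k) := Real.log_le_log (by positivity) (by norm_num; gcongr; norm_num)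
  refine le_trans ?_ (Real.log_le_log ?_ h1)
  · rw [e]
    push_cast
    have r1 : ((2772*k).choose (700*k) : ℝ) ≠ 0 := Nat.cast_ne_zero.2 q1.ne'
    have r2 : ((2672*k).choose (500*k) : ℝ) ≠ 0 := Nat.cast_ne_zero.2 q2.ne'
    have r3 : ((2572*k).choose (300*k) : ℝ) ≠ 0 := Nat.cast_ne_zero.2 q3.ne'
    rw [Real.log_mul (mul_ne_zero (mul_ne_zero r1 r2) r3) (by positivity), Real.log_mul (mul_ne_zero r1 r2) r3, Real.log_mul r1 r2, Real.log_pow]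
    unfold LU
    norm_num at b1 b2 b3 c2 c3
    push_cast
    nlinarith
  · rw [e]; positivity

end Pf
end

section
open Filter Topology

namespace Pf

lemma hata_core (α : ℝ) (hα : Irrational α) (p q : ℕ → ℤ) (σ s τ : ℝ) (hσ : 0 ≤ σ) (hs : s ≤ σ) (hD : 0 < τ - (σ - s)) (k0 : ℕ)
    (h1 : ∀ k ≥ k0, Real.exp (s * k) ≤ q k) (h2 : ∀ k ≥ k0, (q k : ℝ) ≤ Real.exp (σ * k))
    (h3 : ∀ k ≥ k0, |q k * α - p k| ≤ Real.exp (-(τ * k)))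
    (a : ℤ) (b : ℕ) (hb : 0 < b) (κ : ℝ) (hab : |α - a / b| < (b:ℝ) ^ (-κ)) (hbig : 1 ≤ 2 * b * Real.exp (-(τ * k0))) :
    (κ - 1) * Real.log b ≤ Real.log 2 + σ * (1 + (Real.log (2 * b) + σ) / (τ - (σ - s))) := by
  have hτ : 0 < τ := by linarith
  have hbR : (0:ℝ) < b := by exact_mod_cast hb
  -- tends to zero
  have hex : ∃ n, k0 ≤ n ∧ 2 * b * Real.exp (-(τ * n)) < 1 := by
    have : Tendsto (fun n : ℕ => 2 * b * Real.exp (-(τ * n))) atTop (𝓝 (2 * b * 0)) := by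
      refine Tendsto.const_mul _ (Real.tendsto_exp_neg_atTop_nhds_zero.comp ?_)
      exact tendsto_natCast_atTop_atTop.const_mul_atTop hτ
    rw [mul_zero] at this
    obtain ⟨n, hn⟩ := ((eventually_ge_atTop k0).and (this.eventually_lt_const zero_lt_one)).exists
    exact ⟨n, hn⟩
  classical
  obtain ⟨hn0, hn1⟩ := Nat.find_spec hex
  have hmin : ∀ m, m < Nat.find hex → ¬ _ := fun m => Nat.find_min hex
  set n := Nat.find hex with hn
  have hnk : k0 < n := by
    rcases hn0.eq_or_lt with h | h
    · rw [← h] at hn1; linarith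
    · exact h
  have hprev : 1 ≤ 2 * b * Real.exp (-(τ * (n - 1 : ℕ))) := by
    by_contra hcon
    exact hmin (n-1) (by omega) ⟨by omega, not_le.1 hcon⟩
  have key : ∀ k ≥ k0, p k * b - a * q k = 0 → |α - a/b| ≤ Real.exp (-((τ + s) * k)) := by
    intro k hk h0
    have hq : 0 < (q k:ℝ) := lt_of_lt_of_le (Real.exp_pos _) (h1 k hk)
    have h0' : (p k:ℝ) * b - a * q k = 0 := by exact_mod_cast h0
    have e : (q k:ℝ) * α - p k = q k * (α - a / b) := by
      field_simp; linarith
    have h4 := h3 k hk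
    rw [e, abs_mul, abs_of_pos hq] at h4
    have h5 : Real.exp (s*k) * |α - a/b| ≤ Real.exp (-(τ * k)) :=
      (mul_le_mul_of_nonneg_right (h1 k hk) (abs_nonneg _)).trans h4
    rw [show -((τ+s)*k) = -(τ*k) - s*k by ring, Real.exp_sub, le_div_iff₀ (Real.exp_pos _)]
    linarith
  have hne : 0 < |α - a/b| := by
    rw [abs_pos, sub_ne_zero]
    intro h
    exact hα ⟨(a:ℚ)/b, by rw [h]; push_cast; rfl⟩
  have hex2 : ∃ N, n ≤ N ∧ p N * b - a * q N ≠ 0 := by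
    by_contra hcon
    push Not at hcon
    have : Tendsto (fun k : ℕ => Real.exp (-((τ+s) * k))) atTop (𝓝 0) := by
      refine Real.tendsto_exp_neg_atTop_nhds_zero.comp ?_
      exact tendsto_natCast_atTop_atTop.const_mul_atTop (by linarith)
    obtain ⟨k, hk1, hk2⟩ := ((eventually_ge_atTop n).and (this.eventually_lt_const hne)).exists
    linarith [key k (by omega) (hcon k hk1)]
  obtain ⟨hN0, hN1⟩ := Nat.find_spec hex2
  have hmin2 : ∀ m, m < Nat.find hex2 → ¬ _ := fun m => Nat.find_min hex2
  set N := Nat.find hex2 with hN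
  -- lower bound
  have hqN : 0 < (q N:ℝ) := lt_of_lt_of_le (Real.exp_pos _) (h1 N (by omega))
  have low : 1 ≤ 2 * b * (q N) * |α - a/b| := by
    have i1 : (1:ℝ) ≤ |(p N:ℝ) * b - a * q N| := by
      have := Int.one_le_abs hN1
      exact_mod_cast this
    have i2 : (p N:ℝ) * b - a * q N = -(b * (q N * α - p N)) + b * q N * (α - a/b) := by
      field_simp; ring
    have i3 : |(p N:ℝ) * b - a * q N| ≤ b * |q N * α - p N| + b * q N * |α - a/b| := by
      rw [i2]
      refine (abs_add_le _ _).trans (le_of_eq ?_)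
      rw [abs_neg, abs_mul, abs_mul, abs_mul, abs_of_pos hbR, abs_of_pos hqN]
    have i4 : Real.exp (-(τ * N)) ≤ Real.exp (-(τ * n)) := by
      rw [Real.exp_le_exp]
      have : (n:ℝ) ≤ N := by exact_mod_cast hN0
      nlinarith
    have i5 := (h3 N (by omega)).trans i4
    have i6 := mul_le_mul_of_nonneg_left i5 hbR.le
    linarith
  have hlogb : Real.log (2 * b) = Real.log 2 + Real.log b := Real.log_mul two_ne_zero hbR.ne'
  -- upper bound for N
  have hNle : (N:ℝ) - 1 ≤ (Real.log (2 * b) + σ) / (τ - (σ - s)) := by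
    rw [le_div_iff₀ hD]
    have hlg : ∀ x : ℝ, 1 ≤ 2 * b * Real.exp x → -x ≤ Real.log (2*b) := by
      intro x hx
      have := Real.log_le_log one_pos hx
      rw [Real.log_one, Real.log_mul (by positivity) (Real.exp_pos _).ne', Real.log_exp] at this
      linarith
    have hNpos : (0:ℝ) ≤ (N:ℝ) - 1 := by
      have : 1 ≤ N := by omega
      have : (1:ℝ) ≤ N := by exact_mod_cast this
      linarith
    rcases hN0.eq_or_lt with h | h
    · have := hlg _ hprev
      rw [Nat.cast_sub (by omega), Nat.cast_one, h] at this
      nlinarith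
    · have hz : p (N-1) * b - a * q (N-1) = 0 := by
        by_contra hcon
        exact hmin2 (N-1) (by omega) ⟨by omega, hcon⟩
      have h6 := key (N-1) (by omega) hz
      have h7 := h2 N (by omega)
      have h8 : 1 ≤ 2 * b * Real.exp (σ * N + -((τ + s) * (N - 1 : ℕ))) := by
        rw [Real.exp_add, ← mul_assoc]
        refine low.trans ?_
        gcongr
      have := hlg _ h8
      rw [Nat.cast_sub (by omega), Nat.cast_one] at this
      linarith
  -- conclude
  have hfin : 1 ≤ 2 * Real.exp (σ * N) * (b * (b:ℝ)^(-κ)) := by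
    have h7 := h2 N (by omega)
    calc (1:ℝ) ≤ 2 * b * (q N) * |α - a/b| := low
      _ ≤ 2 * b * Real.exp (σ * N) * (b:ℝ)^(-κ) := by gcongr
      _ = _ := by ring
  have := Real.log_le_log one_pos hfin
  rw [Real.log_one, Real.log_mul (by positivity) (by positivity), Real.log_mul (by positivity) (by positivity),
    Real.log_exp, Real.log_mul (by positivity) (by positivity), Real.log_rpow hbR] at this
  have h9 := mul_le_mul_of_nonneg_left hNle hσ
  nlinarith

theorem hata (α : ℝ) (hα : Irrational α) (p q : ℕ → ℤ) (σ s τ : ℝ) (hs : s ≤ σ) (hD : 0 < τ - (σ - s))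
    (h1 : ∀ᶠ k : ℕ in atTop, Real.exp (s * k) ≤ q k) (h2 : ∀ᶠ k : ℕ in atTop, (q k : ℝ) ≤ Real.exp (σ * k))
    (h3 : ∀ᶠ k : ℕ in atTop, |q k * α - p k| ≤ Real.exp (-(τ * k)))
    (κ : ℝ) (hκ : 1 + σ / (τ - (σ - s)) < κ) :
    {pq : ℤ × ℕ+ | |α - (pq.1 : ℝ) / ((pq.2 : ℕ) : ℝ)| < ((pq.2 : ℕ) : ℝ) ^ (-κ)}.Finite := by
  obtain ⟨k0, hk0⟩ := eventually_atTop.1 (h1.and (h2.and h3))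
  have hσ : 0 ≤ σ := by
    obtain ⟨g1, g2, -⟩ := hk0 (k0+1) (by omega)
    have g3 : 0 < (q (k0+1):ℝ) := lt_of_lt_of_le (Real.exp_pos _) g1
    have g4 : (1:ℝ) ≤ q (k0+1) := by
      have : 0 < q (k0+1) := by exact_mod_cast g3
      exact_mod_cast this
    have g5 := Real.one_le_exp_iff.1 (g4.trans g2)
    exact nonneg_of_mul_nonneg_left g5 (by positivity)
  set D := τ - (σ - s) with hDdef
  have hκ1 : 0 < κ := by have : 0 ≤ σ / D := by positivity
                         linarith
  have hlim : Tendsto (fun b : ℕ => (κ - 1 - σ / D) * Real.log b) atTop atTop :=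
    (Real.tendsto_log_atTop.comp tendsto_natCast_atTop_atTop).const_mul_atTop (by linarith)
  have hlim2 : Tendsto (fun b : ℕ => 2 * (b:ℝ) * Real.exp (-(τ * k0))) atTop atTop :=
    (tendsto_natCast_atTop_atTop.const_mul_atTop two_pos).atTop_mul_const (Real.exp_pos _)
  obtain ⟨Q, hQ⟩ := eventually_atTop.1 ((hlim.eventually_gt_atTop (Real.log 2 + σ * (1 + (Real.log 2 + σ)/D))).and (hlim2.eventually_ge_atTop 1))
  have hsub : {pq : ℤ × ℕ+ | |α - (pq.1 : ℝ) / ((pq.2 : ℕ) : ℝ)| < ((pq.2 : ℕ) : ℝ) ^ (-κ)} ⊆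
      ((Set.Icc (-⌈(|α|+1) * Q⌉) ⌈(|α|+1) * Q⌉) ×ˢ {b : ℕ+ | b ≤ Q.succPNat}) := by
    rintro ⟨a, b⟩ hab
    simp only [Set.mem_ofPred_eq] at hab
    have hbR : (0:ℝ) < (b:ℕ) := by exact_mod_cast b.pos
    have hb1 : (1:ℝ) ≤ (b:ℕ) := by exact_mod_cast b.pos
    have hbQ : (b:ℕ) < Q := by
      by_contra hcon
      obtain ⟨g1, g2⟩ := hQ b (not_lt.1 hcon)
      have := hata_core α hα p q σ s τ hσ hs hD k0 (fun k hk => (hk0 k hk).1) (fun k hk => (hk0 k hk).2.1)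
        (fun k hk => (hk0 k hk).2.2) a b b.pos κ hab g2
      rw [Real.log_mul two_ne_zero hbR.ne', ← hDdef] at this
      have e : σ * (1 + (Real.log 2 + Real.log (b:ℕ) + σ)/D) = σ * (1 + (Real.log 2 + σ)/D) + σ / D * Real.log (b:ℕ) := by ring
      rw [e] at this
      linarith
    have hle : ((b:ℕ):ℝ) ^ (-κ) ≤ 1 := Real.rpow_le_one_of_one_le_of_nonpos hb1 (by linarith)
    have h5 : |(a:ℝ) / (b:ℕ)| ≤ |α| + 1 := by
      have := abs_sub_abs_le_abs_sub ((a:ℝ)/(b:ℕ)) α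
      rw [abs_sub_comm] at this
      linarith
    rw [abs_div, abs_of_pos hbR, div_le_iff₀ hbR] at h5
    have h6 : |(a:ℝ)| ≤ (|α|+1) * Q := h5.trans (by
      have : ((b:ℕ):ℝ) ≤ Q := by exact_mod_cast hbQ.le
      gcongr)
    have h7 := h6.trans (Int.le_ceil _)
    have h8 : |a| ≤ ⌈(|α|+1) * Q⌉ := by exact_mod_cast h7
    refine ⟨abs_le.1 h8, ?_⟩
    simp only [Set.mem_ofPred_eq]
    rw [← PNat.coe_le_coe, Nat.succPNat_coe]
    omega
  refine Set.Finite.subset ((Set.finite_Icc _ _).prod (Set.finite_Iic _)) hsub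

end Pf
end

section
namespace Pf

lemma log_bd (r x : ℝ) (hx0 : 0 ≤ x) (hx1 : x < 1) (n : ℕ) (hr : r = (1+x)/(1-x)) :
    2 * (∑ i ∈ Finset.range n, x ^ (2 * i + 1) / (2 * i + 1)) ≤ Real.log r ∧
    Real.log r ≤ 2 * ((∑ i ∈ Finset.range n, x ^ (2 * i + 1) / (2 * i + 1)) + x ^ (2 * n + 1) / (1 - x ^ 2)) := by
  have h1 := Real.sum_range_le_log_div hx0 hx1 n
  have h2 := Real.log_div_le_sum_range_add hx0 hx1 n
  rw [← hr] at h1 h2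
  constructor <;> linarith

lemma lg2 : 0.6931471805599 ≤ Real.log 2 ∧ Real.log 2 ≤ 0.6931471805600 := by
  have h := log_bd 2 (1/3) (by norm_num) (by norm_num) 14 (by norm_num)
  norm_num [Finset.sum_range_succ] at h
  constructor <;> linarith

lemma log_bd2 (r x : ℝ) (j : ℤ) (hx0 : 0 ≤ x) (hx1 : x < 1) (n : ℕ) (hr : r = 2^j * ((1+x)/(1-x))) :
    j * Real.log 2 + 2 * (∑ i ∈ Finset.range n, x ^ (2 * i + 1) / (2 * i + 1)) ≤ Real.log r ∧
    Real.log r ≤ j * Real.log 2 + 2 * ((∑ i ∈ Finset.range n, x ^ (2 * i + 1) / (2 * i + 1)) + x ^ (2 * n + 1) / (1 - x ^ 2)) := by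
  have h := log_bd _ x hx0 hx1 n rfl
  have e : Real.log r = j * Real.log 2 + Real.log ((1+x)/(1-x)) := by
    have : 0 < 1 - x := by linarith
    rw [hr, Real.log_mul (by positivity) (by positivity), Real.log_zpow]
  rw [e]
  constructor <;> linarith [h.1, h.2]

lemma lg_3 : 1.09861228866 ≤ Real.log 3 ∧ Real.log 3 ≤ 1.09861228868 := by
  have h := log_bd2 3 (1/5) (1) (by norm_num) (by norm_num) 9 (by norm_num)
  have h2 := lg2
  norm_num [Finset.sum_range_succ] at h
  constructor <;> linarith

lemma lg_5 : 1.60943791243 ≤ Real.log 5 ∧ Real.log 5 ≤ 1.60943791244 := by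
  have h := log_bd2 5 (1/9) (2) (by norm_num) (by norm_num) 6 (by norm_num)
  have h2 := lg2
  norm_num [Finset.sum_range_succ] at h
  constructor <;> linarith

lemma lg_7 : 1.94591014905 ≤ Real.log 7 ∧ Real.log 7 ≤ 1.94591014906 := by
  have h := log_bd2 7 (3/11) (2) (by norm_num) (by norm_num) 11 (by norm_num)
  have h2 := lg2
  norm_num [Finset.sum_range_succ] at h
  constructor <;> linarith

lemma lg_zlo : -0.62236250374 ≤ Real.log (838554753/1562500000) ∧ Real.log (838554753/1562500000) ≤ -0.62236250372 := by
  have h := log_bd2 (838554753/1562500000) (57304753/1619804753) (-1) (by norm_num) (by norm_num) 4 (by norm_num)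
  have h2 := lg2
  norm_num [Finset.sum_range_succ] at h
  constructor <;> linarith

lemma lg_zhi : -0.62236250370 ≤ Real.log (26833752097/50000000000) ∧ Real.log (26833752097/50000000000) ≤ -0.62236250369 := by
  have h := log_bd2 (26833752097/50000000000) (1833752097/51833752097) (-1) (by norm_num) (by norm_num) 4 (by norm_num)
  have h2 := lg2
  norm_num [Finset.sum_range_succ] at h
  constructor <;> linarith

lemma lg_u1 : 0.29110435973 ≤ Real.log (6689521/5000000) ∧ Real.log (6689521/5000000) ≤ 0.29110435975 := by
  have h := log_bd2 (6689521/5000000) (1689521/11689521) (0) (by norm_num) (by norm_num) 7 (by norm_num)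
  have h2 := lg2
  norm_num [Finset.sum_range_succ] at h
  constructor <;> linarith

lemma lg_l1 : -1.08499285563 ≤ Real.log (1689521/5000000) ∧ Real.log (1689521/5000000) ≤ -1.08499285562 := by
  have h := log_bd2 (1689521/5000000) (439521/2939521) (-2) (by norm_num) (by norm_num) 7 (by norm_num)
  have h2 := lg2
  norm_num [Finset.sum_range_succ] at h
  constructor <;> linarith

lemma lg_u2 : 0.20721390553 ≤ Real.log (12302457/10000000) ∧ Real.log (12302457/10000000) ≤ 0.20721390554 := by
  have h := log_bd2 (12302457/10000000) (2302457/22302457) (0) (by norm_num) (by norm_num) 6 (by norm_num)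
  have h2 := lg2
  norm_num [Finset.sum_range_succ] at h
  constructor <;> linarith

lemma lg_l2 : -1.46860827938 ≤ Real.log (2302457/10000000) ∧ Real.log (2302457/10000000) ≤ -1.46860827937 := by
  have h := log_bd2 (2302457/10000000) (1052457/3552457) (-3) (by norm_num) (by norm_num) 11 (by norm_num)
  have h2 := lg2
  norm_num [Finset.sum_range_succ] at h
  constructor <;> linarith

lemma lg_u3 : 0.12404423779 ≤ Real.log (22641319/20000000) ∧ Real.log (22641319/20000000) ≤ 0.12404423781 := by
  have h := log_bd2 (22641319/20000000) (2641319/42641319) (0) (by norm_num) (by norm_num) 5 (by norm_num)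
  have h2 := lg2
  norm_num [Finset.sum_range_succ] at h
  constructor <;> linarith

lemma lg_l3 : -2.02445385996 ≤ Real.log (2641319/20000000) ∧ Real.log (2641319/20000000) ≤ -2.02445385994 := by
  have h := log_bd2 (2641319/20000000) (141319/5141319) (-3) (by norm_num) (by norm_num) 4 (by norm_num)
  have h2 := lg2
  norm_num [Finset.sum_range_succ] at h
  constructor <;> linarith

lemma lg_n2772 : 7.92732436030 ≤ Real.log 2772 ∧ Real.log 2772 ≤ 7.92732436032 := by
  have h := log_bd2 2772 (181/1205) (11) (by norm_num) (by norm_num) 7 (by norm_num)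
  have h2 := lg2
  norm_num [Finset.sum_range_succ] at h
  constructor <;> linarith

lemma lg_n700 : 6.55108033504 ≤ Real.log 700 ∧ Real.log 700 ≤ 6.55108033505 := by
  have h := log_bd2 700 (47/303) (9) (by norm_num) (by norm_num) 7 (by norm_num)
  have h2 := lg2
  norm_num [Finset.sum_range_succ] at h
  constructor <;> linarith

lemma lg_n2072 : 7.63626960337 ≤ Real.log 2072 ∧ Real.log 2072 ≤ 7.63626960339 := by
  have h := log_bd2 2072 (3/515) (11) (by norm_num) (by norm_num) 3 (by norm_num)
  have h2 := lg2
  norm_num [Finset.sum_range_succ] at h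
  constructor <;> linarith

lemma lg_n2672 : 7.89058253465 ≤ Real.log 2672 ∧ Real.log 2672 ≤ 7.89058253466 := by
  have h := log_bd2 2672 (39/295) (11) (by norm_num) (by norm_num) 7 (by norm_num)
  have h2 := lg2
  norm_num [Finset.sum_range_succ] at h
  constructor <;> linarith

lemma lg_n500 : 6.21460809841 ≤ Real.log 500 ∧ Real.log 500 ≤ 6.21460809843 := by
  have h := log_bd2 500 (61/189) (8) (by norm_num) (by norm_num) 12 (by norm_num)
  have h2 := lg2
  norm_num [Finset.sum_range_succ] at h
  constructor <;> linarith

lemma lg_n2172 : 7.68340368105 ≤ Real.log 2172 ∧ Real.log 2172 ≤ 7.68340368106 := by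
  have h := log_bd2 2172 (31/1055) (11) (by norm_num) (by norm_num) 4 (by norm_num)
  have h2 := lg2
  norm_num [Finset.sum_range_succ] at h
  constructor <;> linarith

lemma lg_n2572 : 7.85243908535 ≤ Real.log 2572 ∧ Real.log 2572 ≤ 7.85243908537 := by
  have h := log_bd2 2572 (131/1155) (11) (by norm_num) (by norm_num) 6 (by norm_num)
  have h2 := lg2
  norm_num [Finset.sum_range_succ] at h
  constructor <;> linarith

lemma lg_n300 : 5.70378247465 ≤ Real.log 300 ∧ Real.log 300 ≤ 5.70378247466 := by
  have h := log_bd2 300 (11/139) (8) (by norm_num) (by norm_num) 5 (by norm_num)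
  have h2 := lg2
  norm_num [Finset.sum_range_succ] at h
  constructor <;> linarith

lemma lg_n2272 : 7.72841577983 ≤ Real.log 2272 ∧ Real.log 2272 ≤ 7.72841577985 := by
  have h := log_bd2 2272 (7/135) (11) (by norm_num) (by norm_num) 5 (by norm_num)
  have h2 := lg2
  norm_num [Finset.sum_range_succ] at h
  constructor <;> linarith

lemma lg_a0 : 2.79470404472 ≤ Real.log (81788934317/5000000000) ∧ Real.log (81788934317/5000000000) ≤ 2.79470404473 := by
  have h := log_bd2 (81788934317/5000000000) (1788934317/161788934317) (4) (by norm_num) (by norm_num) 3 (by norm_num)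
  have h2 := lg2
  norm_num [Finset.sum_range_succ] at h
  constructor <;> linarith

lemma lg_a1 : 2.46281328413 ≤ Real.log (58688934317/5000000000) ∧ Real.log (58688934317/5000000000) ≤ 2.46281328415 := by
  have h := log_bd2 (58688934317/5000000000) (18688934317/98688934317) (3) (by norm_num) (by norm_num) 8 (by norm_num)
  have h2 := lg2
  norm_num [Finset.sum_range_succ] at h
  constructor <;> linarith

lemma lg_a2 : 2.27189770106 ≤ Real.log (48488934317/5000000000) ∧ Real.log (48488934317/5000000000) ≤ 2.27189770107 := by
  have h := log_bd2 (48488934317/5000000000) (8488934317/88488934317) (3) (by norm_num) (by norm_num) 6 (by norm_num)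
  have h2 := lg2
  norm_num [Finset.sum_range_succ] at h
  constructor <;> linarith

lemma lg_a3 : 1.85595212796 ≤ Real.log (31988934317/5000000000) ∧ Real.log (31988934317/5000000000) ≤ 1.85595212798 := by
  have h := log_bd2 (31988934317/5000000000) (11988934317/51988934317) (2) (by norm_num) (by norm_num) 9 (by norm_num)
  have h2 := lg2
  norm_num [Finset.sum_range_succ] at h
  constructor <;> linarith

lemma lg_a4 : 1.61696687123 ≤ Real.log (25188934317/5000000000) ∧ Real.log (25188934317/5000000000) ≤ 1.61696687125 := by
  have h := log_bd2 (25188934317/5000000000) (5188934317/45188934317) (2) (by norm_num) (by norm_num) 6 (by norm_num)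
  have h2 := lg2
  norm_num [Finset.sum_range_succ] at h
  constructor <;> linarith

lemma lg_a5 : 1.11769140703 ≤ Real.log (15288934317/5000000000) ∧ Real.log (15288934317/5000000000) ≤ 1.11769140705 := by
  have h := log_bd2 (15288934317/5000000000) (5288934317/25288934317) (1) (by norm_num) (by norm_num) 9 (by norm_num)
  have h2 := lg2
  norm_num [Finset.sum_range_succ] at h
  constructor <;> linarith

end Pf
end

section
open Filter Topology

namespace Pf

lemma tail_term (a b s k0 k : ℝ) (ha : 0 < a) (hab : a ≤ b) (_hs : -1 < s) (hk0 : 1 ≤ k0) (hk : k0 ≤ k)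
    (h1 : a + b ≤ 2 * s + 1) (h2 : (k0+a)*(k0+b) ≤ (k0+s)*(k0+s+1)) :
    (b-a) * (1/(k+s) - 1/(k+s+1)) ≤ 1/(k+a) - 1/(k+b) := by
  have p1 : 0 < k + a := by linarith
  have p2 : 0 < k + b := by linarith
  have p3 : 0 < k + s := by linarith
  have e1 : 1/(k+a) - 1/(k+b) = (b-a) * (1/((k+a)*(k+b))) := by field_simp; ring
  have e2 : 1/(k+s) - 1/(k+s+1) = 1/((k+s)*(k+s+1)) := by
    have : k + s + 1 ≠ 0 := by linarith
    field_simp; ring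
  rw [e1, e2]
  apply mul_le_mul_of_nonneg_left _ (by linarith)
  apply one_div_le_one_div_of_le (by positivity)
  nlinarith

noncomputable def gM (k : ℝ) : ℝ := (1/(k+1/6) - 1/(k+3/7)) + (1/(k+1/2) - 1/(k+5/7)) + (1/(k+3/4) - 1/(k+6/7))
noncomputable def tM (k : ℝ) : ℝ := (3/7-1/6) * (1/(k-1/5)) + (5/7-1/2) * (1/(k+219/2000)) + (6/7-3/4) * (1/(k+3061/10000))

lemma MK_eq (K : ℕ) : MK K = ∑ k ∈ Finset.range K, gM k := by
  unfold MK idx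
  rw [Finset.sum_product]
  refine Finset.sum_congr rfl fun k _ => ?_
  rw [Fin.sum_univ_three]
  simp [la, lb, gM]

lemma gM_ge (k : ℝ) (hk : 50 ≤ k) : tM k - tM (k+1) ≤ gM k := by
  have h1 := tail_term (1/6) (3/7) (-1/5) 50 k (by norm_num) (by norm_num) (by norm_num) (by norm_num) hk (by norm_num) (by norm_num)
  have h2 := tail_term (1/2) (5/7) (219/2000) 50 k (by norm_num) (by norm_num) (by norm_num) (by norm_num) hk (by norm_num) (by norm_num)
  have h3 := tail_term (3/4) (6/7) (3061/10000) 50 k (by norm_num) (by norm_num) (by norm_num) (by norm_num) hk (by norm_num) (by norm_num)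
  unfold gM tM
  rw [show k + 1 - 1/5 = k + -1/5 + 1 by ring, show k - 1/5 = k + -1/5 by ring, show k + 1 + 219/2000 = k + 219/2000 + 1 by ring,
    show k + 1 + 3061/10000 = k + 3061/10000 + 1 by ring]
  linarith

lemma sum50 : 4.98343684 ≤ ∑ k ∈ Finset.range 50, gM k := by
  unfold gM
  norm_num [Finset.sum_range_succ]

lemma MK_tail (K : ℕ) (hK : 50 ≤ K) : (∑ k ∈ Finset.range 50, gM k) + tM 50 - tM K ≤ MK K := by
  rw [MK_eq]
  induction K, hK using Nat.le_induction with
  | base => simp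
  | succ K hK ih =>
    rw [Finset.sum_range_succ _ K]
    have := gM_ge K (by exact_mod_cast hK)
    push_cast
    linarith

lemma MK_big : ∃ K, 4.995102 ≤ MK K := by
  refine ⟨10000000, le_trans ?_ (MK_tail 10000000 (by norm_num))⟩
  have := sum50
  have : 0.0116652 + (tM ((10000000:ℕ):ℝ)) ≤ tM 50 := by unfold tM; norm_num
  linarith

noncomputable def et : ℝ := 1.2995718

lemma th_lt : thJ et < 2 * Real.pi := by
  have hpi := Real.pi_pos
  unfold thJ et
  have h1 := Real.arctan_add_eq_add_pi (x := 3.83/1.2995718) (y := 1.17/1.2995718) (by norm_num) (by norm_num)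
  have h2 := Real.arctan_add_eq_add_pi (x := 3.17/1.2995718) (y := 1.83/1.2995718) (by norm_num) (by norm_num)
  have h3 := Real.arctan_add_eq_add_pi (x := 2.83/1.2995718) (y := 2.17/1.2995718) (by norm_num) (by norm_num)
  set r1 := ((3.83/1.2995718:ℝ) + 1.17/1.2995718) / (1 - 3.83/1.2995718 * (1.17/1.2995718)) with hr1
  set r2 := ((3.17/1.2995718:ℝ) + 1.83/1.2995718) / (1 - 3.17/1.2995718 * (1.83/1.2995718)) with hr2
  set r3 := ((2.83/1.2995718:ℝ) + 2.17/1.2995718) / (1 - 2.83/1.2995718 * (2.17/1.2995718)) with hr3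
  have h4 := Real.arctan_add_eq_sub_pi (x := r1) (y := r2) (by rw [hr1, hr2]; norm_num) (by rw [hr1]; norm_num)
  have h5 : Real.arctan ((r1 + r2)/(1 - r1*r2)) < Real.arctan (-r3) := by
    apply Real.arctan_strictMono
    rw [hr1, hr2, hr3]; norm_num
  rw [Real.arctan_neg] at h5
  linarith

noncomputable def L1 : ℝ := 1689521/5000000
noncomputable def L2 : ℝ := 2302457/10000000
noncomputable def L3 : ℝ := 2641319/20000000

lemma L_lt : (1+L1)*(1+L2)*(1+L3)*zz < 1 := by
  have : zz < 26833752097/50000000000 := by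
    rw [zz_eq]; have := s11_lo; linarith
  have h0 : (1+L1)*(1+L2)*(1+L3)*(26833752097/50000000000) < 1 := by unfold L1 L2 L3; norm_num
  have : (1+L1)*(1+L2)*(1+L3)*zz ≤ (1+L1)*(1+L2)*(1+L3)*(26833752097/50000000000) := by
    have : 0 ≤ (1+L1)*(1+L2)*(1+L3) := by unfold L1 L2 L3; norm_num
    gcongr
  linarith

noncomputable def UH : ℝ := 350 * Real.log (1+L1) - 700 * Real.log L1 + (250 * Real.log (1+L2) - 500 * Real.log L2)
  + (150 * Real.log (1+L3) - 300 * Real.log L3)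

lemma logz : -0.62236250374 ≤ Real.log zz ∧ Real.log zz ≤ -0.62236250369 := by
  have h1 := s11_lo
  have h2 := s11_hi
  have a1 : Real.log (838554753/1562500000) ≤ Real.log zz := Real.log_le_log (by norm_num) (by rw [zz_eq]; linarith)
  have a2 : Real.log zz ≤ Real.log (26833752097/50000000000) := Real.log_le_log zz_pos (by rw [zz_eq]; linarith)
  exact ⟨lg_zlo.1.trans a1, a2.trans lg_zhi.2⟩

lemma UH_le : UH ≤ 2273.431936 := by
  unfold UH
  rw [show 1 + L1 = 6689521/5000000 by unfold L1; norm_num, show 1 + L2 = 12302457/10000000 by unfold L2; norm_num, show 1 + L3 = 22641319/20000000 by unfold L3; norm_num]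
  unfold L1 L2 L3
  linarith [lg_u1.2, lg_u2.2, lg_u3.2, lg_l1.1, lg_l2.1, lg_l3.1]

lemma LU_ge : 2273.431910 ≤ LU zz := by
  unfold LU
  linarith [lg_n2772.1, lg_n2672.1, lg_n2572.1, lg_n700.2, lg_n500.2, lg_n300.2, lg_n2072.2, lg_n2172.2, lg_n2272.2, logz.1]

lemma rho_le : 100 * (SJ et - TJ + 0.33 * Real.log zz) ≤ -855.254232 := by
  unfold SJ TJ et
  have a0 : Real.log (3.83^2+1.2995718^2) ≤ _ := (Real.log_le_log (by norm_num) (by norm_num)).trans lg_a0.2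
  have a1 : Real.log (3.17^2+1.2995718^2) ≤ _ := (Real.log_le_log (by norm_num) (by norm_num)).trans lg_a1.2
  have a2 : Real.log (2.83^2+1.2995718^2) ≤ _ := (Real.log_le_log (by norm_num) (by norm_num)).trans lg_a2.2
  have a3 : Real.log (2.17^2+1.2995718^2) ≤ _ := (Real.log_le_log (by norm_num) (by norm_num)).trans lg_a3.2
  have a4 : Real.log (1.83^2+1.2995718^2) ≤ _ := (Real.log_le_log (by norm_num) (by norm_num)).trans lg_a4.2
  have a5 : Real.log (1.17^2+1.2995718^2) ≤ _ := (Real.log_le_log (by norm_num) (by norm_num)).trans lg_a5.2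
  linarith [lg_3.1, lg_5.1, lg_7.1, logz.2]

noncomputable def cM (M : ℝ) : ℝ := 750 * Real.log 2 - 250 * Real.log 5 + 100 * (7 - M)

lemma cM_le (M : ℝ) (hM : 4.995102 ≤ M) : cM M ≤ 317.990708 := by
  unfold cM
  linarith [lg2.2, lg_5.1]

lemma final_num (M : ℝ) (hM : 4.995102 ≤ M) (σ s τ : ℝ) (h1 : σ = cM M + UH + 0.0001) (h2 : s = cM M + LU zz - 0.0001)
    (h3 : τ = -(cM M + 100 * (SJ et - TJ + 0.33 * Real.log zz)) - 0.0001) : 0 < τ - (σ - s) ∧ σ < 4.82338 * (τ - (σ - s)) := by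
  have := cM_le M hM
  have := UH_le
  have := LU_ge
  have := rho_le
  constructor <;> linarith

end Pf
end

section
open Filter Topology

namespace Pf

lemma ev_small (A B ε : ℝ) (hB : 0 ≤ B) (hε : 0 < ε) : ∀ᶠ k : ℕ in atTop, A + B * Real.log (2772*k+1) ≤ ε * k := by
  have ht : Tendsto (fun k : ℕ => 2772*(k:ℝ)+1) atTop atTop :=
    tendsto_atTop_add_const_right _ _ (tendsto_natCast_atTop_atTop.const_mul_atTop (by norm_num))
  have h1 := (Real.isLittleO_log_id_atTop.comp_tendsto ht).def (c := ε / (2 * 2773 * (B+1))) (by positivity)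
  have h2 : ∀ᶠ k : ℕ in atTop, A ≤ ε/2 * k :=
    (tendsto_natCast_atTop_atTop.const_mul_atTop (by positivity : 0 < ε/2)).eventually_ge_atTop A
  filter_upwards [h1, h2, eventually_ge_atTop 1] with k g1 g2 g3
  have hk : (1:ℝ) ≤ k := by exact_mod_cast g3
  simp only [Function.comp, id] at g1
  rw [Real.norm_eq_abs, Real.norm_eq_abs, abs_of_pos (by positivity : (0:ℝ) < 2772*k+1)] at g1
  have g4 := (le_abs_self _).trans g1
  have g5 : ε / (2 * 2773 * (B+1)) * (2772*k+1) ≤ ε / (2 * 2773 * (B+1)) * (2773*k) := by gcongr; linarith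
  have g6 : B * (ε / (2 * 2773 * (B+1)) * (2773*k)) = (B/(B+1)) * (ε/2*k) := by field_simp
  have g7 : B/(B+1) ≤ 1 := by rw [div_le_one (by positivity)]; linarith
  have g8 : B * Real.log (2772*k+1) ≤ B * (ε / (2 * 2773 * (B+1)) * (2773*k)) := by gcongr; linarith
  have g9 : (B/(B+1)) * (ε/2*k) ≤ 1 * (ε/2*k) := by gcongr
  linarith

noncomputable def TT (K k : ℕ) : ℝ := (Nat.lcmUpto (700*k):ℝ) * 2^(350*k+250*k+150*k) / (5^(250*k) * (PP (100*k:ℝ) K : ℕ))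

lemma lcm_pos (n : ℕ) : 0 < Nat.lcmUpto n := Nat.pos_of_ne_zero (Nat.lcmUpto_ne_zero n)

lemma TT_pos (K k : ℕ) : 0 < TT K k := by
  have h1 := lcm_pos (700*k)
  have h2 := PP_pos (100*k:ℝ) K
  unfold TT; positivity

lemma TT_log (K : ℕ) (e : ℝ) (he : 0 < e) : ∀ᶠ k : ℕ in atTop, (cM (MK K) - e) * k ≤ Real.log (TT K k) ∧ Real.log (TT K k) ≤ (cM (MK K) + e) * k := by
  have ht : Tendsto (fun k : ℕ => 100*(k:ℝ)) atTop atTop :=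
    tendsto_natCast_atTop_atTop.const_mul_atTop (by norm_num)
  have h1 := (lcm_tendsto.sub ((PP_tendsto K).comp ht)).eventually (Metric.ball_mem_nhds (7 - MK K) (by positivity : 0 < e/100))
  filter_upwards [h1, eventually_ge_atTop 1] with k g1 g3
  have hk : (1:ℝ) ≤ k := by exact_mod_cast g3
  rw [Real.dist_eq, abs_lt] at g1
  simp only [Function.comp] at g1
  rw [← sub_div] at g1
  set L := Real.log (Nat.lcmUpto (700*k)) - Real.log (PP (100*k:ℝ) K) with hL
  have hk0 : (0:ℝ) < 100 * k := by positivity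
  have i1 := g1.1
  have i2 := g1.2
  have e1 : L / (100*k) * (100*k) = L := by field_simp
  have a1 : (L / (100*k) - (7 - MK K)) * (100*k) < e/100 * (100*k) := by gcongr
  have a2 : -(e/100) * (100*k) < (L / (100*k) - (7 - MK K)) * (100*k) := by gcongr
  rw [sub_mul, e1] at a1 a2
  have p1 := lcm_pos (700*k)
  have p2 := PP_pos (100*k:ℝ) K
  have e2 : Real.log (TT K k) = L + k * (750 * Real.log 2 - 250 * Real.log 5) := by
    unfold TT
    rw [Real.log_div (by positivity) (by positivity), Real.log_mul (by positivity) (by positivity), Real.log_mul (by positivity) (by positivity),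
      Real.log_pow, Real.log_pow, hL]
    push_cast; ring
  rw [e2]
  unfold cM
  constructor <;> nlinarith

lemma z_facts : zz < 1 ∧ zz/(1-zz)^2 = 5/2 ∧ (1-zz)^2/(1+zz) * 11 = (1-zz) * Real.sqrt 11 := by
  have h := s11_sq
  have h1 := s11_lo
  have h2 := s11_hi
  rw [zz_eq]
  refine ⟨by linarith, ?_, ?_⟩
  · rw [div_eq_iff (by nlinarith)]
    nlinarith
  · have : 1 + (6 - Real.sqrt 11)/5 ≠ 0 := by linarith
    rw [div_mul_eq_mul_div, div_eq_iff this]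
    linear_combination ((Real.sqrt 11 - 1)/25) * h

lemma xlog (x : ℝ) (hx : 0 < x) : (x+1) * Real.log (x+1) - x * Real.log x ≤ Real.log (x+1) + 1 := by
  have h := Real.log_le_sub_one_of_pos (by positivity : 0 < (x+1)/x)
  rw [Real.log_div (by positivity) hx.ne'] at h
  have e : (x+1)/x - 1 = 1/x := by field_simp; ring
  rw [e] at h
  have := mul_le_mul_of_nonneg_left h hx.le
  rw [mul_one_div_cancel hx.ne'] at this
  nlinarith

theorem main (κ : ℝ) (hκ : 5.82338 < κ) :
    {pq : ℤ × ℕ+ | |Real.sqrt 11 * Real.log zz - (pq.1 : ℝ) / ((pq.2 : ℕ) : ℝ)| < ((pq.2 : ℕ) : ℝ) ^ (-κ)}.Finite := by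
  obtain ⟨K, hK⟩ := MK_big
  obtain ⟨hz1, hw, hw2⟩ := z_facts
  have hz := zz_pos
  have har := fun k : ℕ => arith (350*k) (250*k) (150*k) (Nat.lcmUpto (700*k)) (PP (100*k:ℝ) K) (by omega) (PP_pos _ _) (lcm_pos _) zz hz hz1 hw
    (fun t => ff_dvd k K t) (fun t => gg_dvd k K t)
  choose s1 s2 hX hY using har
  choose X hX using hX
  choose Y hY using hY
  set U : ℕ → ℝ := fun k => ∑' t, (ff (350*k) (250*k) (150*k) t : ℝ) * zz^t with hU
  set V : ℕ → ℝ := fun k => ∑' t, gg (350*k) (250*k) (150*k) t * zz^t with hV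
  have hX' : ∀ k, (X k : ℝ) = TT K k * ((1-zz) * U k) := fun k => (hX k).symm
  have hY' : ∀ k, (Y k : ℝ) = TT K k * ((1-zz)^2/(1+zz) * V k) := fun k => (hY k).symm
  have h1z : 0 < 1 - zz := by linarith
  -- bounds on U
  have hUpos : ∀ k, 0 < U k := by
    intro k
    have h1 : (ff (350*k) (250*k) (150*k) (350*k) : ℝ) * zz^(350*k) ≤ U k := (s1 k).le_tsum _ fun t _ => by positivity
    refine lt_of_lt_of_le ?_ h1
    have : 0 < ff (350*k) (250*k) (150*k) (350*k) := by
      unfold ff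
      have q1 : 0 < (350*k+350*k).choose (2*(350*k)) := Nat.choose_pos (by omega)
      have q2 : 0 < (350*k+250*k).choose (2*(250*k)) := Nat.choose_pos (by omega)
      have q3 : 0 < (350*k+150*k).choose (2*(150*k)) := Nat.choose_pos (by omega)
      positivity
    positivity
  have pL1 : 0 < L1 := by unfold L1; norm_num
  have pL2 : 0 < L2 := by unfold L2; norm_num
  have pL3 : 0 < L3 := by unfold L3; norm_num
  obtain ⟨C1, hC1⟩ : ∃ C1 : ℝ, ∀ k : ℕ, Real.log (U k) ≤ UH * k + C1 := by
    have hg : 0 < 1 - (1+L1)*(1+L2)*(1+L3)*zz := by linarith [L_lt]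
    refine ⟨Real.log (1 - (1+L1)*(1+L2)*(1+L3)*zz)⁻¹, fun k => ?_⟩
    have h := U_upper (350*k) (250*k) (150*k) zz L1 L2 L3 hz pL1 pL2 pL3 L_lt (s1 k)
    refine (Real.log_le_log (hUpos k) h).trans (le_of_eq ?_)
    rw [Real.log_mul (by positivity) (by positivity), Real.log_mul (by positivity) (by positivity), Real.log_mul (by positivity) (by positivity),
      Real.log_mul (by positivity) (by positivity), Real.log_mul (by positivity) (by positivity), Real.log_mul (by positivity) (by positivity)]
    simp only [Real.log_inv, Real.log_pow]
    unfold UH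
    push_cast; ring
  have hlogX : ∀ k, Real.log (X k) = Real.log (TT K k) + (Real.log (1-zz) + Real.log (U k)) := by
    intro k
    rw [hX', Real.log_mul (TT_pos K k).ne' (mul_pos h1z (hUpos k)).ne', Real.log_mul h1z.ne' (hUpos k).ne']
  have hXpos : ∀ k, 0 < (X k:ℝ) := fun k => by rw [hX']; exact mul_pos (TT_pos K k) (mul_pos h1z (hUpos k))
  obtain ⟨C2, hC2⟩ := JJ_bound et (by unfold et; norm_num) th_lt (Real.log zz)
  obtain ⟨hD, hfin⟩ := final_num (MK K) hK _ _ _ rfl rfl rfl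
  set σ := cM (MK K) + UH + 0.0001 with hσ
  set s := cM (MK K) + LU zz - 0.0001 with hs
  set τ := -(cM (MK K) + 100 * (SJ et - TJ + 0.33 * Real.log zz)) - 0.0001 with hτ
  have hTT := TT_log K 0.00001 (by norm_num)
  have E1 : ∀ᶠ k : ℕ in atTop, Real.exp (s * k) ≤ X k := by
    filter_upwards [hTT, ev_small (6 - Real.log (1-zz)) 6 0.00005 (by norm_num) (by norm_num), eventually_ge_atTop 1] with k g1 g2 g3
    rw [← Real.le_log_iff_exp_le (hXpos k), hlogX]
    have g4 := U_lower k g3 zz hz (s1 k)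
    have hk : (1:ℝ) ≤ k := by exact_mod_cast g3
    have g5 : Real.log (2772*k) ≤ Real.log (2772*k+1) := Real.log_le_log (by positivity) (by linarith)
    have g6 := g1.1
    have : s * k = (cM (MK K) - 0.00001) * k + k * LU zz - 0.00009 * k := by rw [hs]; ring
    rw [this]
    change _ ≤ Real.log (U k) at g4
    linarith
  have E2 : ∀ᶠ k : ℕ in atTop, (X k:ℝ) ≤ Real.exp (σ * k) := by
    filter_upwards [hTT, ev_small (C1 + Real.log (1-zz)) 0 0.00005 (by norm_num) (by norm_num), eventually_ge_atTop 1] with k g1 g2 g3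
    rw [← Real.log_le_iff_le_exp (hXpos k), hlogX]
    have g4 := hC1 k
    have g6 := g1.2
    have hk : (1:ℝ) ≤ k := by exact_mod_cast g3
    have : σ * k = (cM (MK K) + 0.00001) * k + UH * k + 0.00009 * k := by rw [hσ]; ring
    rw [this]
    linarith
  have E3 : ∀ᶠ k : ℕ in atTop, |X k * (Real.sqrt 11 * Real.log zz) - ((-11 * Y k : ℤ):ℝ)| ≤ Real.exp (-(τ * k)) := by
    set C3 := max ((1-zz) * Real.sqrt 11 / Real.sqrt zz * C2) 1 with hC3
    have hC3p : 0 < C3 := lt_of_lt_of_le one_pos (le_max_right _ _)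
    filter_upwards [hTT, ev_small (Real.log C3 + 15) 15 0.00005 (by norm_num) (by norm_num), eventually_ge_atTop 1] with k g1 g2 g3
    have hk : (1:ℝ) ≤ k := by exact_mod_cast g3
    have hJ := JJ_eq k zz hz hz1 (s1 k) (s2 k)
    have hJn : ‖JJ k (Real.log zz)‖ = Real.sqrt zz * |Real.log zz * U k + V k| := by
      rw [hJ, Complex.norm_real, Real.norm_eq_abs, abs_neg, abs_mul, abs_of_nonneg (Real.sqrt_nonneg _)]
    have hsq : 0 < Real.sqrt zz := Real.sqrt_pos.2 hz
    have hs11 : 0 < Real.sqrt 11 := Real.sqrt_pos.2 (by norm_num)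
    have e1 : X k * (Real.sqrt 11 * Real.log zz) - ((-11 * Y k : ℤ):ℝ) = TT K k * ((1-zz) * Real.sqrt 11) * (Real.log zz * U k + V k) := by
      push_cast
      rw [hX', hY']
      linear_combination (TT K k * V k) * hw2
    rw [e1, abs_mul, abs_of_pos (mul_pos (TT_pos K k) (mul_pos h1z hs11))]
    have e2 : |Real.log zz * U k + V k| = ‖JJ k (Real.log zz)‖ / Real.sqrt zz := by rw [hJn]; field_simp
    rw [e2]
    have b1 := hC2 k g3
    set E := Real.exp ((100*k:ℝ) * (SJ et - TJ + 0.33 * Real.log zz) + 15 * ((100*k+1:ℝ) * Real.log (100*k+1) - 100*k * Real.log (100*k))) with hE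
    have b2 : TT K k * ((1-zz) * Real.sqrt 11) * (‖JJ k (Real.log zz)‖ / Real.sqrt zz) ≤ TT K k * (C3 * E) := by
      calc _ = TT K k * ((1-zz) * Real.sqrt 11 / Real.sqrt zz * ‖JJ k (Real.log zz)‖) := by ring
        _ ≤ TT K k * ((1-zz) * Real.sqrt 11 / Real.sqrt zz * (C2 * E)) := by
          have := TT_pos K k
          gcongr
        _ = TT K k * (((1-zz) * Real.sqrt 11 / Real.sqrt zz * C2) * E) := by ring
        _ ≤ _ := by
          have := TT_pos K k
          have hEp : 0 < E := Real.exp_pos _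
          gcongr
          exact le_max_left _ _
    refine b2.trans ?_
    have hEp : 0 < E := Real.exp_pos _
    rw [← Real.log_le_iff_le_exp (mul_pos (TT_pos K k) (mul_pos hC3p hEp)), Real.log_mul (TT_pos K k).ne' (mul_pos hC3p hEp).ne',
      Real.log_mul hC3p.ne' hEp.ne', hE, Real.log_exp]
    have x1 := xlog (100*k) (by positivity)
    have x2 : Real.log (100*k+1) ≤ Real.log (2772*k+1) := Real.log_le_log (by positivity) (by linarith)
    have g6 := g1.2
    have : -(τ * k) = (cM (MK K) + 0.00001) * k + (100*k:ℝ) * (SJ et - TJ + 0.33 * Real.log zz) + 0.00009 * k := by rw [hτ]; ring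
    rw [this]
    linarith
  have hirr := alpha_irrational
  refine hata _ hirr (fun k => -11 * Y k) X σ s τ ?_ hD E1 E2 E3 κ ?_
  · obtain ⟨k, k1, k2, k3⟩ := (E1.and (E2.and (eventually_ge_atTop 1))).exists
    have k4 : (0:ℝ) < k := by exact_mod_cast k3
    exact le_of_mul_le_mul_right (Real.exp_le_exp.1 (k1.trans k2)) k4
  · have : σ / (τ - (σ - s)) < 4.82338 := by rwa [div_lt_iff₀ hD]
    linarith

end Pf
end

theorem irrationality_measure_alpha_1 :
    ∀ κ : ℝ, κ > 5.82338 →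
      {pq : ℤ × ℕ+ |
        |Real.sqrt 11 * Real.log ((Real.sqrt 11 - 1) / (Real.sqrt 11 + 1)) -
            (pq.1 : ℝ) / ((pq.2 : ℕ) : ℝ)| <
          ((pq.2 : ℕ) : ℝ) ^ (-κ)}.Finite := by
  intro κ hκ
  exact Pf.main κ hκ
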